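/- Let a ≥ 1, d ∈ ℕ, β ∈ (0,∞), K ≥ 1 and ν ∈ [0,1). Then there exist positive constants C_L, C_r, C_B and c_1 (depending only on a, d, β, K, ν) such that for every f_0 ∈ H_d^β(K) and every sufficiently large M ∈ ℕ, there exists a DNN f ∈ F_{ρν}^{DNN}(⌈C_L log₂ M⌉, ⌈C_r M^d⌉, C_B) with sup_{x ∈ [−a,a]^d} |f(x) − f_0(x)| ≤ c_1 M^{−2β}. -/

import Mathlib

noncomputable section

/-- Leaky-ReLU activation. -/
def lrelu (ν x : ℝ) : ℝ := max x (ν * x)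

/-- A fully connected Leaky-ReLU network with input dimension `d` and hidden width `r`:
a first affine layer `ℝ^d → ℝ^r`, a list of inner affine layers `ℝ^r → ℝ^r`, and an
output affine layer `ℝ^r → ℝ`.  Each affine layer except the last is followed by the
componentwise Leaky-ReLU activation.  The number of hidden layers (the depth) is
`hid.length + 1`. -/
structure LNet (d r : ℕ) where
  W0 : Fin r → Fin d → ℝ
  b0 : Fin r → ℝ
  hid : List ((Fin r → Fin r → ℝ) × (Fin r → ℝ))
  Wout : Fin r → ℝ
  bout : ℝ

/-- Evaluation of a Leaky-ReLU network. -/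
def LNet.eval (ν : ℝ) {d r : ℕ} (net : LNet d r) (x : Fin d → ℝ) : ℝ :=
  let h := net.hid.foldl
    (fun (h : Fin r → ℝ) p => fun i => lrelu ν ((∑ j, p.1 i j * h j) + p.2 i))
    (fun i => lrelu ν ((∑ j, net.W0 i j * x j) + net.b0 i))
  (∑ i, net.Wout i * h i) + net.bout

/-- All weights and biases of the network are bounded by `B` in absolute value. -/
def LNet.bounded {d r : ℕ} (net : LNet d r) (B : ℝ) : Prop :=
  (∀ i j, |net.W0 i j| ≤ B) ∧ (∀ i, |net.b0 i| ≤ B) ∧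
  (∀ p ∈ net.hid, (∀ i j, |p.1 i j| ≤ B) ∧ (∀ i, |p.2 i| ≤ B)) ∧
  (∀ i, |net.Wout i| ≤ B) ∧ |net.bout| ≤ B

/-- Membership in the class `F_{ρν}^{DNN}(L, r, B)` of Leaky-ReLU networks with
architecture `(L, (d, r, …, r, 1))` and all parameters bounded by `B`. -/
def memDNN (ν : ℝ) (d L r : ℕ) (B : ℝ) (f : (Fin d → ℝ) → ℝ) : Prop :=
  ∃ net : LNet d r, net.hid.length + 1 = L ∧ net.bounded B ∧ ∀ x, f x = net.eval ν x

/-- The cube `[−a,a]^d`. -/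
def cube (a : ℝ) (d : ℕ) : Set (Fin d → ℝ) := {x | ∀ i, x i ∈ Set.Icc (-a) a}

/-- Partial derivative of `f : ℝ^d → ℝ` in coordinate `i`. -/
def pder {d : ℕ} (i : Fin d) (f : (Fin d → ℝ) → ℝ) : (Fin d → ℝ) → ℝ :=
  fun x => fderiv ℝ f x (Pi.single i 1)

/-- Multi-index partial derivative `∂^α f = ∂_1^{α 1} ⋯ ∂_d^{α d} f`. -/
def pderm {d : ℕ} (α : Fin d → ℕ) (f : (Fin d → ℝ) → ℝ) : (Fin d → ℝ) → ℝ :=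
  (List.finRange d).foldr (fun i g => (pder i)^[α i] g) f

/-- Membership in the Hölder ball `H_d^β(K)` on `[−a,a]^d`: `f` is `⌊β⌋`-times
continuously differentiable and there are bounds `S α` on `|∂^α f|` over the cube for all
multi-indices with `|α|₁ < β`, and Hölder constants `H α` for `∂^α f` (with exponent
`β − ⌊β⌋`, with respect to the sup-norm) for all multi-indices with `|α|₁ = ⌊β⌋`, whose
total sum is at most `K`. -/
def memHolder (a : ℝ) (d : ℕ) (β K : ℝ) (f : (Fin d → ℝ) → ℝ) : Prop :=
  ContDiff ℝ (⌊β⌋₊ : ℕ∞) f ∧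
  ∃ S H : (Fin d → Fin (⌊β⌋₊ + 1)) → ℝ,
    (∀ α : Fin d → Fin (⌊β⌋₊ + 1), ((∑ i, (α i : ℕ) : ℕ) : ℝ) < β →
      ∀ x ∈ cube a d, |pderm (fun i => (α i : ℕ)) f x| ≤ S α) ∧
    (∀ α : Fin d → Fin (⌊β⌋₊ + 1), (∑ i, (α i : ℕ)) = ⌊β⌋₊ →
      ∀ x₁ ∈ cube a d, ∀ x₂ ∈ cube a d, x₁ ≠ x₂ →
        |pderm (fun i => (α i : ℕ)) f x₁ - pderm (fun i => (α i : ℕ)) f x₂| ≤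
          H α * ‖x₁ - x₂‖ ^ (β - (⌊β⌋₊ : ℝ))) ∧
    (∑ α ∈ Finset.univ.filter
        (fun α : Fin d → Fin (⌊β⌋₊ + 1) => ((∑ i, (α i : ℕ) : ℕ) : ℝ) < β), S α) +
      (∑ α ∈ Finset.univ.filter
        (fun α : Fin d → Fin (⌊β⌋₊ + 1) => (∑ i, (α i : ℕ)) = ⌊β⌋₊), H α) ≤ K

namespace DNN

/-- `g` is a bounded combination of the registers `G` and of their positive parts. -/
def Lin {X : Type} (B : ℝ) {ι : Type} [Fintype ι] (G : ι → X → ℝ) (g : X → ℝ) : Prop :=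
  ∃ (w u : ι → ℝ) (b : ℝ), (∀ i, |w i| ≤ B) ∧ (∀ i, |u i| ≤ B) ∧ |b| ≤ B ∧
    ∀ x, g x = ∑ i, (w i * G i x + u i * max (G i x) 0) + b

/-- The family `T` can be computed from the family `G` in `L` steps with at most `m` registers. -/
def Reach {X : Type} (B : ℝ) (m : ℕ) {ι : Type} (G : ι → X → ℝ) :
    ℕ → ∀ {κ : Type}, (κ → X → ℝ) → Prop
  | 0, κ, T => ∃ φ : κ → ι, ∀ k, T k = G (φ k)
  | L + 1, _, T => ∃ (τ : Type) (_ : Fintype τ) (H : τ → X → ℝ),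
      Fintype.card τ ≤ m ∧ Reach B m G L H ∧ ∀ k, Lin B H (T k)

section basic
variable {X : Type} {B B' : ℝ} {m m' L L' : ℕ} {ι κ τ : Type}

lemma Lin.mono [Fintype ι] {G : ι → X → ℝ} {g : X → ℝ} (h : Lin B G g) (hB : B ≤ B') :
    Lin B' G g := by
  obtain ⟨w, u, b, hw, hu, hb, h⟩ := h
  exact ⟨w, u, b, fun i => (hw i).trans hB, fun i => (hu i).trans hB, hb.trans hB, h⟩

lemma Lin.congr [Fintype ι] {G : ι → X → ℝ} {g g' : X → ℝ} (h : Lin B G g)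
    (hg : ∀ x, g' x = g x) : Lin B G g' := by
  have : g' = g := funext hg
  rwa [this]

lemma Lin.add [Fintype ι] {G : ι → X → ℝ} {g g' : X → ℝ} (h : Lin B G g) (h' : Lin B' G g') :
    Lin (B + B') G (fun x => g x + g' x) := by
  obtain ⟨w, u, b, hw, hu, hb, h⟩ := h
  obtain ⟨w', u', b', hw', hu', hb', h'⟩ := h'
  refine ⟨fun i => w i + w' i, fun i => u i + u' i, b + b', fun i => ?_, fun i => ?_, ?_, ?_⟩
  · exact (abs_add_le _ _).trans (add_le_add (hw i) (hw' i))
  · exact (abs_add_le _ _).trans (add_le_add (hu i) (hu' i))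
  · exact (abs_add_le _ _).trans (add_le_add hb hb')
  · intro x
    beta_reduce
    rw [h, h']
    have : ∑ i, ((w i + w' i) * G i x + (u i + u' i) * max (G i x) 0)
      = ∑ i, (w i * G i x + u i * max (G i x) 0) + ∑ i, (w' i * G i x + u' i * max (G i x) 0) := by
      rw [← Finset.sum_add_distrib]
      exact Finset.sum_congr rfl fun i _ => by ring
    rw [this]; ring

lemma Lin.smul [Fintype ι] {G : ι → X → ℝ} {g : X → ℝ} (c : ℝ) (h : Lin B G g) :
    Lin (|c| * B) G (fun x => c * g x) := by
  obtain ⟨w, u, b, hw, hu, hb, h⟩ := h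
  refine ⟨fun i => c * w i, fun i => c * u i, c * b, fun i => ?_, fun i => ?_, ?_, ?_⟩
  · rw [abs_mul]; exact mul_le_mul_of_nonneg_left (hw i) (abs_nonneg _)
  · rw [abs_mul]; exact mul_le_mul_of_nonneg_left (hu i) (abs_nonneg _)
  · rw [abs_mul]; exact mul_le_mul_of_nonneg_left hb (abs_nonneg _)
  · intro x
    beta_reduce
    rw [h, mul_add, Finset.mul_sum]
    congr 1
    exact Finset.sum_congr rfl fun i _ => by ring

lemma Lin.const [Fintype ι] (G : ι → X → ℝ) (c : ℝ) : Lin |c| G (fun _ => c) :=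
  ⟨fun _ => 0, fun _ => 0, c, by simp, by simp, le_rfl, by simp⟩

lemma Lin.sum_reg [Fintype ι] (G : ι → X → ℝ) (w : ι → ℝ) (hB : 0 ≤ B) (hw : ∀ i, |w i| ≤ B) :
    Lin B G (fun x => ∑ i, w i * G i x) :=
  ⟨w, fun _ => 0, 0, hw, fun _ => by simpa, by simpa, by simp⟩

lemma Lin.sum_relu [Fintype ι] (G : ι → X → ℝ) (w : ι → ℝ) (hB : 0 ≤ B) (hw : ∀ i, |w i| ≤ B) :
    Lin B G (fun x => ∑ i, w i * max (G i x) 0) :=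
  ⟨fun _ => 0, w, 0, fun _ => by simpa, hw, by simpa, by simp⟩

lemma Lin.reg [Fintype ι] (G : ι → X → ℝ) (i : ι) : Lin 1 G (G i) := by
  classical
  refine ⟨fun j => if j = i then 1 else 0, fun _ => 0, 0, ?_, by simp, by simp, by simp⟩
  intro j; beta_reduce; split_ifs <;> simp

lemma Lin.relu [Fintype ι] (G : ι → X → ℝ) (i : ι) : Lin 1 G (fun x => max (G i x) 0) := by
  classical
  refine ⟨fun _ => 0, fun j => if j = i then 1 else 0, 0, by simp, ?_, by simp, by simp⟩
  intro j; beta_reduce; split_ifs <;> simp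

lemma Lin.embed [Fintype ι] [Fintype κ] {G : ι → X → ℝ} {G' : κ → X → ℝ} {g : X → ℝ}
    (h : Lin B G' g) (φ : κ → ι) (hφ : Function.Injective φ) (hG : ∀ k, G' k = G (φ k)) :
    Lin B G g := by
  classical
  obtain ⟨w, u, b, hw, hu, hb, h⟩ := h
  have hB : 0 ≤ B := (abs_nonneg _).trans hb
  have hbd : ∀ (v : κ → ℝ), (∀ k, |v k| ≤ B) → ∀ i, |Function.extend φ v 0 i| ≤ B := by
    intro v hv i
    by_cases hi : ∃ k, φ k = i
    · obtain ⟨k, rfl⟩ := hi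
      rw [hφ.extend_apply]; exact hv k
    · rw [Function.extend_apply' _ _ _ hi]; simpa
  refine ⟨Function.extend φ w 0, Function.extend φ u 0, b, hbd w hw, hbd u hu, hb, ?_⟩
  intro x
  rw [h]
  congr 1
  symm
  rw [← Finset.sum_subset (Finset.subset_univ (Finset.univ.image φ)),
    Finset.sum_image (fun a _ b _ hab => hφ hab)]
  · exact Finset.sum_congr rfl fun k _ => by rw [hφ.extend_apply, hφ.extend_apply, hG]
  · intro i _ hi
    have : ¬ ∃ k, φ k = i := by simpa using hi
    rw [Function.extend_apply' _ _ _ this, Function.extend_apply' _ _ _ this]; simp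

lemma Lin.fsum [Fintype ι] {G : ι → X → ℝ} (s : Finset κ) (g : κ → X → ℝ)
    (h : ∀ k ∈ s, Lin B G (g k)) : Lin (s.card * B) G (fun x => ∑ k ∈ s, g k x) := by
  classical
  induction s using Finset.induction_on with
  | empty => simpa using Lin.const G 0
  | insert a s ha ih =>
    have h1 := (h a (by simp)).add (ih fun k hk => h k (by simp [hk]))
    refine (h1.mono (by rw [Finset.card_insert_of_notMem ha]; push_cast; linarith)).congr ?_
    intro x; rw [Finset.sum_insert ha]

lemma Reach.mono {G : ι → X → ℝ} {T : κ → X → ℝ} (h : Reach B m G L T) (hB : B ≤ B')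
    (hm : m ≤ m') : Reach B' m' G L T := by
  induction L generalizing κ T with
  | zero => exact h
  | succ L ih =>
    obtain ⟨τ, i, H, hc, hr, hl⟩ := h
    exact ⟨τ, i, H, hc.trans hm, ih hr, fun k => (hl k).mono hB⟩

lemma Reach.reindex {G : ι → X → ℝ} {T : κ → X → ℝ} (h : Reach B m G L T) (φ : τ → κ) :
    Reach B m G L (fun t => T (φ t)) := by
  cases L with
  | zero => obtain ⟨ψ, h⟩ := h; exact ⟨fun t => ψ (φ t), fun t => h _⟩
  | succ L =>
    obtain ⟨τ, i, H, hc, hr, hl⟩ := h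
    exact ⟨τ, i, H, hc, hr, fun k => hl _⟩

lemma Reach.refl (G : ι → X → ℝ) : Reach B m G 0 G := ⟨id, fun _ => rfl⟩

lemma Reach.trans {G : ι → X → ℝ} {H : κ → X → ℝ} {T : τ → X → ℝ} (h : Reach B m G L H)
    (h' : Reach B m H L' T) : Reach B m G (L + L') T := by
  induction L' generalizing τ T with
  | zero =>
    obtain ⟨ψ, h'⟩ := h'
    have : T = fun t => H (ψ t) := funext h'
    rw [this]; exact h.reindex ψ
  | succ L' ih =>
    obtain ⟨τ, i, H', hc, hr, hl⟩ := h'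
    exact ⟨τ, i, H', hc, ih hr, hl⟩

lemma Reach.source {G : ι → X → ℝ} {G' : κ → X → ℝ} {T : τ → X → ℝ} (h : Reach B m G' L T)
    (φ : κ → ι) (hG : ∀ k, G' k = G (φ k)) : Reach B m G L T := by
  have h0 : Reach B m G 0 G' := ⟨φ, hG⟩
  simpa using h0.trans h

lemma Reach.step [Fintype κ] {G : ι → X → ℝ} {H : κ → X → ℝ} {T : τ → X → ℝ}
    (h : Reach B m G L H) (hc : Fintype.card κ ≤ m) (hl : ∀ t, Lin B H (T t)) :
    Reach B m G (L + 1) T := ⟨κ, inferInstance, H, hc, h, hl⟩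

lemma Reach.one [Fintype ι] {G : ι → X → ℝ} {T : τ → X → ℝ}
    (hc : Fintype.card ι ≤ m) (hl : ∀ t, Lin B G (T t)) :
    Reach B m G 1 T := (Reach.refl G).step hc hl

lemma Reach.delay [Fintype κ] {G : ι → X → ℝ} {T : κ → X → ℝ} (h : Reach B m G L T)
    (hc : Fintype.card κ ≤ m) (hB : 1 ≤ B) (hL : L ≤ L') : Reach B m G L' T := by
  induction hL with
  | refl => exact h
  | step _ ih => exact ih.step hc fun k => (Lin.reg T k).mono hB

lemma Reach.carry [Fintype ι] (G : ι → X → ℝ) (hc : Fintype.card ι ≤ m) (hB : 1 ≤ B) :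
    Reach B m G L G := (Reach.refl G).delay hc hB (Nat.zero_le _)

lemma Reach.sigma {J : Type} [Fintype J] {κ : J → Type} {M : J → ℕ} {G : ι → X → ℝ}
    {T : ∀ j, κ j → X → ℝ} (h : ∀ j, Reach B (M j) G L (T j)) :
    Reach B (∑ j, M j) G L (fun p : Σ j, κ j => T p.1 p.2) := by
  induction L generalizing κ T with
  | zero =>
    choose φ hφ using h
    exact ⟨fun p => φ p.1 p.2, fun p => hφ _ _⟩
  | succ L ih =>
    choose τ i H hc hr hl using h
    refine ⟨Σ j, τ j, inferInstance, fun p => H p.1 p.2, ?_, ih hr, ?_⟩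
    · rw [Fintype.card_sigma]; exact Finset.sum_le_sum fun j _ => hc j
    · rintro ⟨j, k⟩
      exact (hl j k).embed (G := fun p : Σ j, τ j => H p.1 p.2) (fun t => ⟨j, t⟩)
        (sigma_mk_injective) (fun _ => rfl)

lemma Reach.par {G : ι → X → ℝ} {T : κ → X → ℝ} {T' : τ → X → ℝ}
    (h : Reach B m G L T) (h' : Reach B m' G L T') :
    Reach B (m + m') G L (Sum.elim T T') := by
  induction L generalizing κ τ T T' with
  | zero =>
    obtain ⟨φ, hφ⟩ := h
    obtain ⟨φ', hφ'⟩ := h'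
    refine ⟨Sum.elim φ φ', ?_⟩
    rintro (k | k)
    · exact hφ k
    · exact hφ' k
  | succ L ih =>
    obtain ⟨σ, i, H, hc, hr, hl⟩ := h
    obtain ⟨σ', i', H', hc', hr', hl'⟩ := h'
    refine ⟨σ ⊕ σ', inferInstance, Sum.elim H H', ?_, ih hr hr', ?_⟩
    · rw [Fintype.card_sum]; omega
    · rintro (k | k)
      · exact (hl k).embed Sum.inl Sum.inl_injective (fun _ => rfl)
      · exact (hl' k).embed Sum.inr Sum.inr_injective (fun _ => rfl)

lemma Reach.pi {J : Type} [Fintype J] {G : ι → X → ℝ}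
    {T : J → X → ℝ} (h : ∀ j, Reach B m G L (fun _ : Unit => T j)) :
    Reach B (Fintype.card J * m) G L T := by
  have := (Reach.sigma h).reindex (fun j : J => (⟨j, ()⟩ : Σ _ : J, Unit))
  simpa using this

end basic

end DNN

namespace DNN

lemma relu_of_lrelu {ν : ℝ} (h0 : 0 ≤ ν) (h1 : ν < 1) (y : ℝ) :
    max y 0 = 1 / (1 - ν ^ 2) * lrelu ν y + ν / (1 - ν ^ 2) * lrelu ν (-y) := by
  have h2 : 0 < 1 - ν ^ 2 := by nlinarith
  unfold lrelu
  rcases le_total 0 y with hy | hy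
  · rw [max_eq_left hy, max_eq_left (by nlinarith), max_eq_right (by nlinarith)]
    field_simp; ring
  · rw [max_eq_right hy, max_eq_right (by nlinarith), max_eq_left (by nlinarith)]
    field_simp; ring

lemma id_of_lrelu {ν : ℝ} (h0 : 0 ≤ ν) (h1 : ν < 1) (y : ℝ) :
    y = 1 / (1 + ν) * lrelu ν y - 1 / (1 + ν) * lrelu ν (-y) := by
  have h2 : 0 < 1 + ν := by linarith
  unfold lrelu
  rcases le_total 0 y with hy | hy
  · rw [max_eq_left (by nlinarith), max_eq_right (by nlinarith)]
    field_simp; ring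
  · rw [max_eq_right (by nlinarith), max_eq_left (by nlinarith)]
    field_simp; ring

lemma lin_out {X : Type} {ν B : ℝ} (h0 : 0 ≤ ν) (h1 : ν < 1) (hB : 0 ≤ B) {τ : Type} [Fintype τ]
    {r : ℕ} (e : τ × Bool → Fin r) (he : Function.Injective e) (H : τ → X → ℝ)
    (h : X → Fin r → ℝ) (ht : ∀ t x, h x (e (t, true)) = lrelu ν (H t x))
    (hf : ∀ t x, h x (e (t, false)) = lrelu ν (-H t x)) {g : X → ℝ} (hg : Lin B H g) :
    ∃ (c : Fin r → ℝ) (b : ℝ), (∀ i, |c i| ≤ 2 * B / (1 - ν ^ 2)) ∧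
      |b| ≤ 2 * B / (1 - ν ^ 2) ∧ ∀ x, g x = ∑ i, c i * h x i + b := by
  classical
  obtain ⟨w, u, b, hw, hu, hb, hg⟩ := hg
  have h2 : 0 < 1 - ν ^ 2 := by nlinarith
  have h3 : 0 < 1 + ν := by linarith
  have hinv : 1 ≤ 1 / (1 - ν ^ 2) := by rw [le_div_iff₀ h2]; nlinarith
  have hinv1 : 1 / (1 + ν) ≤ 1 := by rw [div_le_iff₀ h3]; linarith
  have hinv1' : 0 ≤ 1 / (1 + ν) := by positivity
  have hnu : ν / (1 - ν ^ 2) ≤ 1 / (1 - ν ^ 2) := by gcongr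
  have hnu' : 0 ≤ ν / (1 - ν ^ 2) := by positivity
  have hBB : B ≤ B * (1 / (1 - ν ^ 2)) := by nlinarith
  have hbd : 2 * B / (1 - ν ^ 2) = B * (1 / (1 - ν ^ 2)) + B * (1 / (1 - ν ^ 2)) := by ring
  let v : τ × Bool → ℝ := fun p => if p.2 then w p.1 * (1 / (1 + ν)) + u p.1 * (1 / (1 - ν ^ 2))
    else -(w p.1 * (1 / (1 + ν))) + u p.1 * (ν / (1 - ν ^ 2))
  have hwb : ∀ t, |w t * (1 / (1 + ν))| ≤ B * (1 / (1 - ν ^ 2)) := by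
    intro t
    rw [abs_mul, abs_of_nonneg hinv1']
    exact mul_le_mul (hw t) (hinv1.trans hinv) hinv1' hB
  have hub : ∀ t, |u t * (1 / (1 - ν ^ 2))| ≤ B * (1 / (1 - ν ^ 2)) := by
    intro t
    rw [abs_mul, abs_of_nonneg (zero_le_one.trans hinv)]
    exact mul_le_mul_of_nonneg_right (hu t) (zero_le_one.trans hinv)
  have hub' : ∀ t, |u t * (ν / (1 - ν ^ 2))| ≤ B * (1 / (1 - ν ^ 2)) := by
    intro t
    rw [abs_mul, abs_of_nonneg hnu']
    exact mul_le_mul (hu t) hnu hnu' hB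
  have hv : ∀ p, |v p| ≤ 2 * B / (1 - ν ^ 2) := by
    rintro ⟨t, _ | _⟩
    · simp only [v, Bool.false_eq_true, if_false]
      rw [hbd]
      refine (abs_add_le _ _).trans (add_le_add ?_ (hub' t))
      rw [abs_neg]; exact hwb t
    · simp only [v, if_true]
      rw [hbd]
      exact (abs_add_le _ _).trans (add_le_add (hwb t) (hub t))
  refine ⟨Function.extend e v 0, b, ?_, ?_, ?_⟩
  · intro i
    by_cases hi : ∃ k, e k = i
    · obtain ⟨k, rfl⟩ := hi
      rw [he.extend_apply]; exact hv k
    · rw [Function.extend_apply' _ _ _ hi]; simp; positivity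
  · rw [hbd]; linarith
  · intro x
    rw [hg]
    congr 1
    symm
    rw [← Finset.sum_subset (Finset.subset_univ (Finset.univ.image e)),
      Finset.sum_image (fun a _ b _ hab => he hab)]
    · rw [Fintype.sum_prod_type]
      refine Finset.sum_congr rfl fun t _ => ?_
      simp only [Fintype.sum_bool, he.extend_apply, ht, hf, v, if_true, Bool.false_eq_true,
        if_false]
      conv_rhs => rw [relu_of_lrelu h0 h1 (H t x)]
      conv_rhs => lhs; rw [id_of_lrelu h0 h1 (H t x)]
      ring
    · intro i _ hi
      have : ¬ ∃ k, e k = i := by simpa using hi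
      rw [Function.extend_apply' _ _ _ this]; simp

lemma rows {τ : Type} {r n : ℕ} {B : ℝ} (hB : 0 ≤ B)
    (e : τ × Bool → Fin r) (he : Function.Injective e) (c : τ → Fin n → ℝ) (b : τ → ℝ)
    (hc : ∀ t j, |c t j| ≤ B) (hb : ∀ t, |b t| ≤ B) :
    ∃ (W : Fin r → Fin n → ℝ) (b' : Fin r → ℝ), (∀ i j, |W i j| ≤ B) ∧ (∀ i, |b' i| ≤ B) ∧
      (∀ t (y : Fin n → ℝ), ∑ j, W (e (t, true)) j * y j + b' (e (t, true))
        = ∑ j, c t j * y j + b t) ∧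
      (∀ t (y : Fin n → ℝ), ∑ j, W (e (t, false)) j * y j + b' (e (t, false))
        = -(∑ j, c t j * y j + b t)) := by
  classical
  refine ⟨Function.extend e (fun p => if p.2 then c p.1 else fun j => -c p.1 j) 0,
    Function.extend e (fun p => if p.2 then b p.1 else -b p.1) 0, ?_, ?_, ?_, ?_⟩
  · intro i j
    by_cases hi : ∃ k, e k = i
    · obtain ⟨⟨t, _ | _⟩, rfl⟩ := hi
      · rw [he.extend_apply]; simpa using hc t j
      · rw [he.extend_apply]; simpa using hc t j
    · rw [Function.extend_apply' _ _ _ hi]; simpa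
  · intro i
    by_cases hi : ∃ k, e k = i
    · obtain ⟨⟨t, _ | _⟩, rfl⟩ := hi
      · rw [he.extend_apply]; simpa using hb t
      · rw [he.extend_apply]; simpa using hb t
    · rw [Function.extend_apply' _ _ _ hi]; simpa
  · intro t y
    rw [he.extend_apply, he.extend_apply]; simp
  · intro t y
    rw [he.extend_apply, he.extend_apply]; simp; ring

lemma exists_emb {τ : Type} [Fintype τ] {m r : ℕ} (hm : Fintype.card τ ≤ m) (hr : 2 * m ≤ r) :
    ∃ e : τ × Bool → Fin r, Function.Injective e := by
  have : Nonempty (τ × Bool ↪ Fin r) := by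
    apply Function.Embedding.nonempty_of_card_le
    simp; omega
  exact ⟨this.some, this.some.injective⟩

/-- Hidden state after the hidden layers. -/
def hstate (ν : ℝ) {d r : ℕ} (W0 : Fin r → Fin d → ℝ) (b0 : Fin r → ℝ)
    (hid : List ((Fin r → Fin r → ℝ) × (Fin r → ℝ))) (x : Fin d → ℝ) : Fin r → ℝ :=
  hid.foldl (fun (h : Fin r → ℝ) p => fun i => lrelu ν ((∑ j, p.1 i j * h j) + p.2 i))
    (fun i => lrelu ν ((∑ j, W0 i j * x j) + b0 i))

lemma conv {ν B : ℝ} (h0 : 0 ≤ ν) (h1 : ν < 1) (hB : 1 ≤ B) {d m r L : ℕ} (hr : 2 * m ≤ r)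
    {κ : Type} {T : κ → (Fin d → ℝ) → ℝ}
    (h : Reach B m (fun (i : Fin d) (x : Fin d → ℝ) => x i) (L + 1) T) :
    ∃ (W0 : Fin r → Fin d → ℝ) (b0 : Fin r → ℝ)
      (hid : List ((Fin r → Fin r → ℝ) × (Fin r → ℝ))), hid.length = L ∧
      (∀ i j, |W0 i j| ≤ 2 * B / (1 - ν ^ 2)) ∧ (∀ i, |b0 i| ≤ 2 * B / (1 - ν ^ 2)) ∧
      (∀ p ∈ hid, (∀ i j, |p.1 i j| ≤ 2 * B / (1 - ν ^ 2)) ∧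
        (∀ i, |p.2 i| ≤ 2 * B / (1 - ν ^ 2))) ∧
      ∀ k, ∃ (c : Fin r → ℝ) (b : ℝ), (∀ i, |c i| ≤ 2 * B / (1 - ν ^ 2)) ∧
        |b| ≤ 2 * B / (1 - ν ^ 2) ∧ ∀ x, T k x = ∑ i, c i * hstate ν W0 b0 hid x i + b := by
  have h2 : 0 < 1 - ν ^ 2 := by nlinarith
  have hinv : 1 ≤ 2 * B / (1 - ν ^ 2) := by rw [le_div_iff₀ h2]; nlinarith
  have hBpos : 0 ≤ 2 * B / (1 - ν ^ 2) := zero_le_one.trans hinv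
  induction L generalizing κ T with
  | zero =>
    obtain ⟨τ, _, H, hc, ⟨φ, hφ⟩, hl⟩ := h
    obtain ⟨e, he⟩ := exists_emb hc hr
    obtain ⟨W, b', hW, hb', ht, hf⟩ := rows hBpos e he (fun t => Pi.single (φ t) (1 : ℝ))
      (fun _ => 0) (by
        intro t j
        by_cases hj : j = φ t
        · subst hj; simpa using hinv
        · simpa [hj] using hBpos) (by simpa using fun _ => hBpos)
    refine ⟨W, b', [], rfl, hW, hb', by simp, fun k => ?_⟩
    refine lin_out h0 h1 (by linarith) e he H _ ?_ ?_ (hl k)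
    · intro t x
      simp only [hstate, List.foldl_nil, ht, hφ]
      simp [Pi.single_apply]
    · intro t x
      simp only [hstate, List.foldl_nil, hf, hφ]
      simp [Pi.single_apply]
  | succ L ih =>
    obtain ⟨τ, _, H, hc, hR, hl⟩ := h
    obtain ⟨W0, b0, hid, hlen, hW0, hb0, hhid, hH⟩ := ih hR
    choose c b hcc hbb hcb using hH
    obtain ⟨e, he⟩ := exists_emb hc hr
    obtain ⟨W, b', hW, hb', ht, hf⟩ := rows hBpos e he c b hcc hbb
    refine ⟨W0, b0, hid ++ [(W, b')], by simp [hlen], hW0, hb0, ?_, fun k => ?_⟩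
    · intro p hp
      rw [List.mem_append, List.mem_singleton] at hp
      rcases hp with hp | rfl
      · exact hhid p hp
      · exact ⟨hW, hb'⟩
    refine lin_out h0 h1 (by linarith) e he H _ ?_ ?_ (hl k)
    · intro t x
      rw [hcb t x, ← ht]
      simp only [hstate, List.foldl_append, List.foldl_cons, List.foldl_nil]
    · intro t x
      rw [hcb t x, ← hf]
      simp only [hstate, List.foldl_append, List.foldl_cons, List.foldl_nil]

lemma memDNN_of_reach {ν B : ℝ} (h0 : 0 ≤ ν) (h1 : ν < 1) (hB : 1 ≤ B) {d m r L : ℕ}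
    (hr : 2 * m ≤ r) (hL : 1 ≤ L) {T : (Fin d → ℝ) → ℝ}
    (h : Reach B m (fun (i : Fin d) (x : Fin d → ℝ) => x i) L (fun _ : Unit => T)) :
    memDNN ν d L r (2 * B / (1 - ν ^ 2)) T := by
  obtain ⟨L, rfl⟩ : ∃ L', L = L' + 1 := ⟨L - 1, by omega⟩
  obtain ⟨W0, b0, hid, hlen, hW0, hb0, hhid, hH⟩ := conv h0 h1 hB hr h
  obtain ⟨c, b, hc, hb, hT⟩ := hH ()
  exact ⟨⟨W0, b0, hid, c, b⟩, by simp [hlen], ⟨hW0, hb0, hhid, hc, hb⟩, fun x => hT x⟩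

end DNN

namespace DNN

section gadgets
variable {X : Type}

lemma Lin.reg' {ι : Type} [Fintype ι] {B : ℝ} (hB : 1 ≤ B) (G : ι → X → ℝ) (i : ι) :
    Lin B G (G i) := (Lin.reg G i).mono hB

/-- Squaring. -/
lemma sq_gadget {B : ℝ} (hB : 4 ≤ B) (m : ℕ) (s : X → ℝ) :
    ∃ h : X → ℝ, Reach B 3 (fun _ : Unit => s) (m + 1) (fun _ : Unit => h) ∧
      ∀ x, 0 ≤ s x → s x ≤ 1 → |h x - s x ^ 2| ≤ (1 / 4) ^ m := by
  have key : ∃ t acc : X → ℝ, Reach B 3 (fun _ : Unit => s) (m + 1)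
      ![t, fun x => 2 * t x - 1, acc] ∧
      ∀ x, 0 ≤ s x → s x ≤ 1 → (0 ≤ t x ∧ t x ≤ 1 ∧ s x ^ 2 = acc x + t x ^ 2 * (1 / 4) ^ m) := by
    induction m with
    | zero =>
      refine ⟨s, fun _ => 0, Reach.one (by simp) ?_, ?_⟩
      · intro i
        fin_cases i
        · exact ⟨fun _ => 1, fun _ => 0, 0, by simp; linarith, by simp; linarith,
            by simp; linarith, by simp⟩
        · exact ⟨fun _ => 2, fun _ => 0, -1, by simp; linarith, by simp; linarith,
            by simp; linarith, by intro x; simp; ring⟩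
        · exact ⟨fun _ => 0, fun _ => 0, 0, by simp; linarith, by simp; linarith,
            by simp; linarith, by simp⟩
      · intro x h0 h1
        simp [h0, h1]
    | succ m ih =>
      obtain ⟨t, acc, hR, hs⟩ := ih
      have hp1 : (1 / 4 : ℝ) ^ m ≤ 1 := pow_le_one₀ (by norm_num) (by norm_num)
      have hp0 : 0 < (1 / 4 : ℝ) ^ m := by positivity
      refine ⟨fun x => 2 * max (2 * t x - 1) 0 - (2 * t x - 1),
        fun x => acc x + (t x - 1 / 4) * (1 / 4) ^ m, hR.step (by simp) ?_, ?_⟩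
      · intro i
        fin_cases i
        · refine ⟨![0, -1, 0], ![0, 2, 0], 0, ?_, ?_, by simp; linarith, ?_⟩
          · intro i; fin_cases i <;> simp <;> linarith
          · intro i; fin_cases i <;> simp <;> linarith
          · intro x; simp [Fin.sum_univ_succ]
            try ring
        · refine ⟨![0, -2, 0], ![0, 4, 0], -1, ?_, ?_, by simp; linarith, ?_⟩
          · intro i; fin_cases i <;> simp <;> linarith
          · intro i; fin_cases i <;> simp <;> linarith
          · intro x; simp [Fin.sum_univ_succ]
            ring
        · refine ⟨![(1 / 4) ^ m, 0, 1], ![0, 0, 0], -(1 / 4 * (1 / 4) ^ m), ?_, ?_, ?_, ?_⟩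
          · intro i; fin_cases i
            · change |(1 / 4 : ℝ) ^ m| ≤ B
              rw [abs_of_pos hp0]; linarith
            · simp; linarith
            · simp; linarith
          · intro i; fin_cases i <;> simp <;> linarith
          · rw [abs_neg, abs_of_pos (by positivity)]; linarith
          · intro x; simp [Fin.sum_univ_succ]
            ring
      · intro x h0 h1
        obtain ⟨ht0, ht1, he⟩ := hs x h0 h1
        refine ⟨?_, ?_, ?_⟩
        · rcases le_total 0 (2 * t x - 1) with h | h
          · simp only [max_eq_left h]; linarith
          · simp only [max_eq_right h]; linarith
        · rcases le_total 0 (2 * t x - 1) with h | h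
          · simp only [max_eq_left h]; linarith
          · simp only [max_eq_right h]; linarith
        · rw [he, pow_succ]
          rcases le_total 0 (2 * t x - 1) with h | h
          · simp only [max_eq_left h]; ring
          · simp only [max_eq_right h]; ring
  obtain ⟨t, acc, hR, hs⟩ := key
  refine ⟨acc, hR.reindex (fun _ => 2), fun x h0 h1 => ?_⟩
  obtain ⟨ht0, ht1, he⟩ := hs x h0 h1
  have hp0 : 0 < (1 / 4 : ℝ) ^ m := by positivity
  rw [he, show acc x - (acc x + t x ^ 2 * (1 / 4) ^ m) = -(t x ^ 2 * (1 / 4) ^ m) by ring,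
    abs_neg, abs_of_nonneg (by positivity)]
  have : t x ^ 2 ≤ 1 := by nlinarith
  nlinarith

/-- Approximate multiplication. -/
lemma mul_gadget {A B : ℝ} (hA : 1 ≤ A) (hB : 4 ≤ B) (hAB : A ^ 2 ≤ B) (m : ℕ) (p q : X → ℝ) :
    ∃ h : X → ℝ, Reach B 6 ![p, q] (m + 4) (fun _ : Unit => h) ∧
      ∀ x, |p x| ≤ A → |q x| ≤ A → |h x - p x * q x| ≤ 2 * A ^ 2 * (1 / 4) ^ m := by
  have hA0 : 0 < A := by linarith
  have hi : |1 / (2 * A)| ≤ B := by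
    rw [abs_of_pos (by positivity), div_le_iff₀ (by positivity)]; nlinarith
  have r1 : Reach B 6 ![p, q] 1
      ![fun x => 1 / (2 * A) * p x + 1 / (2 * A) * q x,
        fun x => 1 / (2 * A) * p x + -(1 / (2 * A)) * q x] := by
    refine Reach.one (by simp) ?_
    intro i
    fin_cases i
    · refine ⟨![1 / (2 * A), 1 / (2 * A)], ![0, 0], 0, ?_, ?_, by simp; linarith, ?_⟩
      · intro i; fin_cases i <;> exact hi
      · intro i; fin_cases i <;> simp <;> linarith
      · intro x; simp [Fin.sum_univ_succ]
    · refine ⟨![1 / (2 * A), -(1 / (2 * A))], ![0, 0], 0, ?_, ?_, by simp; linarith, ?_⟩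
      · intro i; fin_cases i
        · exact hi
        · change |-(1 / (2 * A))| ≤ B
          rw [abs_neg]; exact hi
      · intro i; fin_cases i <;> simp <;> linarith
      · intro x; simp [Fin.sum_univ_succ]
  have r2 : Reach B 6 ![p, q] 2
      ![fun x => |1 / (2 * A) * p x + 1 / (2 * A) * q x|,
        fun x => |1 / (2 * A) * p x + -(1 / (2 * A)) * q x|] := by
    have habs : ∀ y : ℝ, |y| = -y + 2 * max y 0 := by
      intro y
      rcases le_total 0 y with h | h
      · rw [abs_of_nonneg h, max_eq_left h]; ring
      · rw [abs_of_nonpos h, max_eq_right h]; ring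
    refine r1.step (by simp) ?_
    intro i
    fin_cases i
    · refine ⟨![-1, 0], ![2, 0], 0, ?_, ?_, by simp; linarith, ?_⟩
      · intro i; fin_cases i <;> simp <;> linarith
      · intro i; fin_cases i <;> simp <;> linarith
      · intro x
        simp only [Fin.sum_univ_succ]
        simp [habs]
    · refine ⟨![0, -1], ![0, 2], 0, ?_, ?_, by simp; linarith, ?_⟩
      · intro i; fin_cases i <;> simp <;> linarith
      · intro i; fin_cases i <;> simp <;> linarith
      · intro x
        simp only [Fin.sum_univ_succ]
        simp [habs]
  obtain ⟨h1, hR1, hs1⟩ := sq_gadget hB m (fun x => |1 / (2 * A) * p x + 1 / (2 * A) * q x|)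
  obtain ⟨h2, hR2, hs2⟩ := sq_gadget hB m (fun x => |1 / (2 * A) * p x + -(1 / (2 * A)) * q x|)
  have hR1' := hR1.source (G := ![fun x => |1 / (2 * A) * p x + 1 / (2 * A) * q x|,
        fun x => |1 / (2 * A) * p x + -(1 / (2 * A)) * q x|]) (fun _ => 0) (fun _ => rfl)
  have hR2' := hR2.source (G := ![fun x => |1 / (2 * A) * p x + 1 / (2 * A) * q x|,
        fun x => |1 / (2 * A) * p x + -(1 / (2 * A)) * q x|]) (fun _ => 1) (fun _ => rfl)
  have r3 := r2.trans (hR1'.par hR2')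
  refine ⟨fun x => A ^ 2 * h1 x + -A ^ 2 * h2 x, ?_, ?_⟩
  · have r4 := r3.step (T := fun _ : Unit => fun x => A ^ 2 * h1 x + -A ^ 2 * h2 x) (by simp) ?_
    · convert r4 using 1; omega
    · intro _
      refine ⟨Sum.elim (fun _ => A ^ 2) (fun _ => -A ^ 2), fun _ => 0, 0, ?_, ?_, ?_, ?_⟩
      · rintro (i | i) <;> simpa [abs_of_pos hA0] using hAB
      · simp; linarith
      · simp; linarith
      · intro x; simp
  · intro x hp hq
    have hb : ∀ y z : ℝ, |y| ≤ A → |z| ≤ A → |1 / (2 * A) * y + 1 / (2 * A) * z| ≤ 1 := by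
      intro y z hy hz
      rw [← mul_add, abs_mul, abs_of_pos (by positivity : 0 < 1 / (2 * A)),
        one_div_mul_eq_div, div_le_one (by positivity)]
      exact (abs_add_le _ _).trans (by linarith)
    have e1 := hs1 x (abs_nonneg _) (hb _ _ hp hq)
    have e2 := hs2 x (abs_nonneg _) (by
      have := hb (p x) (-q x) hp (by rwa [abs_neg])
      simpa using this)
    rw [sq_abs] at e1 e2
    have hid : p x * q x = A ^ 2 * (1 / (2 * A) * p x + 1 / (2 * A) * q x) ^ 2
        - A ^ 2 * (1 / (2 * A) * p x + -(1 / (2 * A)) * q x) ^ 2 := by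
      field_simp; ring
    rw [hid]
    have hA2 : 0 < A ^ 2 := by positivity
    rw [abs_le] at e1 e2 ⊢
    constructor <;> nlinarith

/-- Products of one bounded register with several small ones. -/
lemma chain_gadget {A K B : ℝ} (hK : 0 ≤ K) (hB : 4 ≤ B) (hAB : A ^ 2 ≤ B) (m d : ℕ)
    (p : X → ℝ) (z : Fin d → X → ℝ) (k : ℕ) (hA : K + k + 1 ≤ A)
    (hm : 2 * A ^ 2 * (1 / 4) ^ m ≤ 1) (w : Fin k → Fin d) :
    ∃ h : X → ℝ, Reach B (6 + d) (Sum.elim (fun _ : Unit => p) z) (k * (m + 4))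
        (Sum.elim (fun _ : Unit => h) z) ∧
      ∀ x, |p x| ≤ K → (∀ i, |z i x| ≤ 1) →
        |h x - p x * ∏ j, z (w j) x| ≤ k * (2 * A ^ 2 * (1 / 4) ^ m) := by
  induction k with
  | zero =>
    refine ⟨p, ?_, ?_⟩
    · rw [zero_mul]; exact Reach.refl _
    · intro x _ _; simp
  | succ k ih =>
    push_cast at hA
    obtain ⟨h, hR, hs⟩ := ih (by linarith) (fun j => w j.castSucc)
    obtain ⟨h', hR', hs'⟩ := mul_gadget (by linarith [(k.cast_nonneg : (0:ℝ) ≤ k)]) hB hAB m h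
      (z (w (Fin.last k)))
    refine ⟨h', ?_, ?_⟩
    · have r1 := hR'.source (G := Sum.elim (fun _ : Unit => h) z)
        ![Sum.inl (), Sum.inr (w (Fin.last k))] (by intro i; fin_cases i <;> rfl)
      have r2 := (Reach.carry (B := B) (m := d) (L := m + 4) z (by simp) (by linarith)).source
        (G := Sum.elim (fun _ : Unit => h) z) Sum.inr (fun _ => rfl)
      rw [add_mul, one_mul]
      exact hR.trans (r1.par r2)
    · intro x hp hz
      have e1 := hs x hp hz
      set ε := 2 * A ^ 2 * (1 / 4 : ℝ) ^ m with hε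
      have hε0 : 0 ≤ ε := by positivity
      have hk0 : (0 : ℝ) ≤ k := k.cast_nonneg
      have hprod : |∏ j : Fin k, z (w j.castSucc) x| ≤ 1 := by
        rw [Finset.abs_prod]
        exact Finset.prod_le_one (fun _ _ => abs_nonneg _) (fun _ _ => hz _)
      have hpp : |p x * ∏ j : Fin k, z (w j.castSucc) x| ≤ K := by
        rw [abs_mul]
        nlinarith [abs_nonneg (p x), abs_nonneg (∏ j : Fin k, z (w j.castSucc) x)]
      have hh : |h x| ≤ A := by
        have : h x = (h x - p x * ∏ j : Fin k, z (w j.castSucc) x)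
          + p x * ∏ j : Fin k, z (w j.castSucc) x := by ring
        rw [this]
        refine (abs_add_le _ _).trans ?_
        nlinarith
      have e2 := hs' x hh ((hz _).trans (by linarith))
      rw [Fin.prod_univ_castSucc]
      have : h' x - p x * ((∏ j : Fin k, z (w j.castSucc) x) * z (w (Fin.last k)) x)
        = (h' x - h x * z (w (Fin.last k)) x)
          + (h x - p x * ∏ j : Fin k, z (w j.castSucc) x) * z (w (Fin.last k)) x := by ring
      rw [this]
      refine (abs_add_le _ _).trans ?_
      rw [abs_mul]
      have e3 : |h x - p x * ∏ j : Fin k, z (w j.castSucc) x| * |z (w (Fin.last k)) x| ≤ k * ε := by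
        nlinarith [abs_nonneg (h x - p x * ∏ j : Fin k, z (w j.castSucc) x),
          abs_nonneg (z (w (Fin.last k)) x), hz (w (Fin.last k))]
      push_cast
      linarith

/-- Median of three numbers. -/
def mid (a b c : ℝ) : ℝ :=
  (b - max (b - a) 0) +
    max ((c - max (c - (a + max (b - a) 0)) 0) - (b - max (b - a) 0)) 0

lemma mid_spec (v : Fin 3 → ℝ) (F ε : ℝ) (s s' : Fin 3) (hss : s ≠ s') (h : |v s - F| ≤ ε)
    (h' : |v s' - F| ≤ ε) : |mid (v 0) (v 1) (v 2) - F| ≤ ε := by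
  have aux : ∀ a b c : ℝ, ((|a - F| ≤ ε ∧ |b - F| ≤ ε) ∨ (|a - F| ≤ ε ∧ |c - F| ≤ ε) ∨
      (|b - F| ≤ ε ∧ |c - F| ≤ ε)) → |mid a b c - F| ≤ ε := by
    intro a b c H
    simp only [abs_le] at H ⊢
    unfold mid
    simp only [max_def]
    constructor <;> split_ifs <;> rcases H with H | H | H <;> linarith [H.1.1, H.1.2, H.2.1, H.2.2]
  apply aux
  fin_cases s <;> fin_cases s' <;> simp_all

lemma mid_gadget {B : ℝ} (hB : 4 ≤ B) (v : Fin 3 → X → ℝ) :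
    Reach B 4 v 4 (fun _ : Unit => fun x => mid (v 0 x) (v 1 x) (v 2 x)) := by
  have r1 : Reach B 4 v 1 ![v 0, v 1, v 2, fun x => v 1 x - v 0 x] := by
    refine Reach.one (by simp) ?_
    intro i
    fin_cases i
    · exact Lin.reg' (by linarith) v 0
    · exact Lin.reg' (by linarith) v 1
    · exact Lin.reg' (by linarith) v 2
    · refine ⟨![-1, 1, 0], ![0, 0, 0], 0, ?_, ?_, by simp; linarith, ?_⟩
      · intro i; fin_cases i <;> simp <;> linarith
      · intro i; fin_cases i <;> simp <;> linarith
      · intro x; simp [Fin.sum_univ_succ]; ring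
  have r2 : Reach B 4 v 2 ![fun x => v 1 x - max (v 1 x - v 0 x) 0, v 2,
      fun x => v 2 x - (v 0 x + max (v 1 x - v 0 x) 0)] := by
    refine r1.step (by simp) ?_
    intro i
    fin_cases i
    · refine ⟨![0, 1, 0, 0], ![0, 0, 0, -1], 0, ?_, ?_, by simp; linarith, ?_⟩
      · intro i; fin_cases i <;> simp <;> linarith
      · intro i; fin_cases i <;> simp <;> linarith
      · intro x; simp [Fin.sum_univ_succ]; ring
    · exact Lin.reg' (by linarith) ![v 0, v 1, v 2, fun x => v 1 x - v 0 x] 2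
    · refine ⟨![-1, 0, 1, 0], ![0, 0, 0, -1], 0, ?_, ?_, by simp; linarith, ?_⟩
      · intro i; fin_cases i <;> simp <;> linarith
      · intro i; fin_cases i <;> simp <;> linarith
      · intro x; simp [Fin.sum_univ_succ]; ring
  have r3 : Reach B 4 v 3 ![fun x => v 1 x - max (v 1 x - v 0 x) 0,
      fun x => (v 2 x - max (v 2 x - (v 0 x + max (v 1 x - v 0 x) 0)) 0)
        - (v 1 x - max (v 1 x - v 0 x) 0)] := by
    refine r2.step (by simp) ?_
    intro i
    fin_cases i
    · exact Lin.reg' (by linarith) ![fun x => v 1 x - max (v 1 x - v 0 x) 0, v 2,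
        fun x => v 2 x - (v 0 x + max (v 1 x - v 0 x) 0)] 0
    · refine ⟨![-1, 1, 0], ![0, 0, -1], 0, ?_, ?_, by simp; linarith, ?_⟩
      · intro i; fin_cases i <;> simp <;> linarith
      · intro i; fin_cases i <;> simp <;> linarith
      · intro x; simp [Fin.sum_univ_succ]; ring
  refine r3.step (by simp) ?_
  intro i
  refine ⟨![1, 0], ![0, 1], 0, ?_, ?_, by simp; linarith, ?_⟩
  · intro i; fin_cases i <;> simp <;> linarith
  · intro i; fin_cases i <;> simp <;> linarith
  · intro x; simp [Fin.sum_univ_succ, mid]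

/-- Iterated medians over all coordinates. -/
lemma median_gadget {B : ℝ} (hB : 4 ≤ B) (k D : ℕ) (hk : k ≤ D) (v : (Fin k → Fin 3) → X → ℝ) :
    ∃ h : X → ℝ, Reach B (4 * 3 ^ D) v (4 * k) (fun _ : Unit => h) ∧
      ∀ x (F ε : ℝ) (g : Fin k → Fin 3 → Prop),
        (∀ i, ∃ s s', s ≠ s' ∧ g i s ∧ g i s') →
        (∀ s : Fin k → Fin 3, (∀ i, g i (s i)) → |v s x - F| ≤ ε) → |h x - F| ≤ ε := by
  induction k with
  | zero =>
    refine ⟨v Fin.elim0, (Reach.refl v).reindex (fun _ => Fin.elim0), ?_⟩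
    intro x F ε g _ h
    exact h _ (fun i => i.elim0)
  | succ k ih =>
    obtain ⟨h, hR, hs⟩ := ih (by omega) (fun s x => mid (v (Fin.cons 0 s) x) (v (Fin.cons 1 s) x)
      (v (Fin.cons 2 s) x))
    refine ⟨h, ?_, ?_⟩
    · have r1 : Reach B (4 * 3 ^ D) v 4 (fun (s : Fin k → Fin 3) x => mid (v (Fin.cons 0 s) x)
          (v (Fin.cons 1 s) x) (v (Fin.cons 2 s) x)) := by
        refine (Reach.pi (m := 4) fun s => ?_).mono le_rfl ?_
        · exact (mid_gadget hB (fun i => v (Fin.cons i s))).source (fun i => Fin.cons i s)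
            (fun _ => rfl)
        · simp
          have : 3 ^ k ≤ 3 ^ D := Nat.pow_le_pow_right (by norm_num) (by omega)
          omega
      have := r1.trans hR
      rwa [show 4 + 4 * k = 4 * (k + 1) by ring] at this
    · intro x F ε g hg hv
      refine hs x F ε (fun i => g i.succ) (fun i => hg i.succ) ?_
      intro s hsg
      obtain ⟨i, j, hij, hi, hj⟩ := hg 0
      refine mid_spec (fun i => v (Fin.cons i s) x) F ε i j hij (hv _ ?_) (hv _ ?_)
      · intro l
        refine Fin.cases ?_ (fun l => ?_) l
        · simpa using hi
        · simpa using hsg l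
      · intro l
        refine Fin.cases ?_ (fun l => ?_) l
        · simpa using hj
        · simpa using hsg l

end gadgets
end DNN

namespace DNN

section digits
variable {X : Type}

/-- Steep step function. -/
def st (n : ℕ) (c u : ℝ) : ℝ := max (2 ^ n * (u - c) + 1) 0 - max (2 ^ n * (u - c)) 0

lemma st_one {n : ℕ} {c u : ℝ} (h : c ≤ u) : st n c u = 1 := by
  unfold st
  have : 0 ≤ 2 ^ n * (u - c) := mul_nonneg (by positivity) (by linarith)
  rw [max_eq_left this, max_eq_left (by linarith)]; ring

lemma st_zero {n : ℕ} {c u : ℝ} (h : u ≤ c - (1 / 2) ^ n) : st n c u = 0 := by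
  unfold st
  have h1 : (2 : ℝ) ^ n * (1 / 2) ^ n = 1 := by rw [← mul_pow]; norm_num
  have h2 : (0 : ℝ) < 2 ^ n := by positivity
  have : 2 ^ n * (u - c) + 1 ≤ 0 := by nlinarith
  rw [max_eq_right this, max_eq_right (by linarith)]; ring

lemma amplify {B : ℝ} (hB : 2 ≤ B) {ι : Type} [Fintype ι] {m : ℕ} (hm : Fintype.card ι ≤ m)
    (G : ι → X → ℝ) (n : ℕ) : Reach B m G n (fun i x => 2 ^ n * G i x) := by
  induction n with
  | zero => simpa using Reach.refl G
  | succ n ih =>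
    refine ih.step hm fun i => ?_
    have := (Lin.reg (fun i x => 2 ^ n * G i x) i).smul 2
    refine (this.mono (by simpa using hB)).congr ?_
    intro x; ring

lemma stair {B : ℝ} (hB : 4 ≤ B) (N n : ℕ) (κ : ℝ) (hκ : 0 ≤ κ) (hN : N * κ ≤ 1) (hκ1 : κ ≤ 1)
    (u : X → ℝ) :
    Reach B (2 * N + 3) (fun _ : Unit => u) (n + 3)
      (Sum.elim (fun (l : Fin (N + 1)) x => st n (l * κ) (u x))
        (fun (_ : Unit) x => u x + κ - κ * ∑ l : Fin (N + 1), st n (l * κ) (u x))) := by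
  have hlk : ∀ l : Fin (N + 1), |(l : ℝ) * κ| ≤ 1 := by
    intro l
    have : (l : ℝ) ≤ N := by exact_mod_cast Nat.lt_succ_iff.mp l.2
    rw [abs_of_nonneg (by positivity)]
    nlinarith
  have r1 : Reach B (2 * N + 3) (fun _ : Unit => u) 1
      (Sum.elim (fun (l : Fin (N + 1)) x => u x - l * κ) (fun (_ : Unit) => u)) := by
    refine Reach.one (by simp) ?_
    rintro (l | l)
    · refine ⟨fun _ => 1, fun _ => 0, -(l * κ), by simp; linarith, by simp; linarith, ?_, ?_⟩
      · rw [abs_neg]; exact (hlk l).trans (by linarith)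
      · intro x; simp; ring
    · exact Lin.reg' (by linarith) (fun _ : Unit => u) ()
  have a1 := (amplify (B := B) (by linarith) (m := N + 1) (by simp)
    (fun (l : Fin (N + 1)) x => u x - l * κ) n).source (G :=
      (Sum.elim (fun (l : Fin (N + 1)) x => u x - l * κ) (fun (_ : Unit) => u))) Sum.inl
      (fun _ => rfl)
  have a2 := (Reach.carry (B := B) (m := 1) (L := n) (fun _ : Unit => u) (by simp)
    (by linarith)).source (G :=
      (Sum.elim (fun (l : Fin (N + 1)) x => u x - l * κ) (fun (_ : Unit) => u))) Sum.inr
      (fun _ => rfl)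
  have r2 := r1.trans ((a1.par a2).mono (m' := 2 * N + 3) le_rfl (by omega))
  have r3 := r2.step (T := Sum.elim (Sum.elim (fun (l : Fin (N + 1)) x => 2 ^ n * (u x - l * κ) + 1)
    (fun (l : Fin (N + 1)) x => 2 ^ n * (u x - l * κ))) (fun (_ : Unit) => u))
    (by simp; omega) ?_
  · have r4 := r3.step (T := (Sum.elim (fun (l : Fin (N + 1)) x => st n (l * κ) (u x))
        (fun (_ : Unit) x => u x + κ - κ * ∑ l : Fin (N + 1), st n (l * κ) (u x))))
      (by simp; omega) ?_
    · convert r4 using 1; omega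
    · rintro (l | l)
      · refine ⟨fun _ => 0, Sum.elim (Sum.elim (fun k => if k = l then 1 else 0)
          (fun k => if k = l then -1 else 0)) (fun _ => 0), 0, by simp; linarith, ?_,
          by simp; linarith, ?_⟩
        · rintro ((k | k) | k)
          · simp only [Sum.elim_inl]; split_ifs <;> simp <;> linarith
          · simp only [Sum.elim_inl, Sum.elim_inr]; split_ifs <;> simp <;> linarith
          · simp; linarith
        · intro x
          simp [st]
          ring
      · have hκB : |κ| ≤ B := by rw [abs_of_nonneg hκ]; linarith
        refine ⟨Sum.elim (fun _ => 0) (fun _ => 1), Sum.elim (Sum.elim (fun k => -κ)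
          (fun k => κ)) (fun _ => 0), κ, ?_, ?_, hκB, ?_⟩
        · rintro (k | k) <;> simp <;> linarith
        · rintro ((k | k) | k)
          · simpa using hκB
          · simpa using hκB
          · simp; linarith
        · intro x
          simp [st, ← Finset.mul_sum, Finset.sum_sub_distrib]
          ring
  · rintro ((l | l) | l)
    · have := (Lin.reg (Sum.elim (fun (i : Fin (N + 1)) x => 2 ^ n * (u x - i * κ))
        (fun (_ : Unit) => u)) (Sum.inl l)).add (Lin.const _ 1)
      exact (this.mono (by simp; linarith)).congr (fun x => rfl)
    · exact Lin.reg' (by linarith) (Sum.elim (fun (i : Fin (N + 1)) x => 2 ^ n * (u x - i * κ))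
        (fun (_ : Unit) => u)) (Sum.inl l)
    · exact Lin.reg' (by linarith) (Sum.elim (fun (i : Fin (N + 1)) x => 2 ^ n * (u x - i * κ))
        (fun (_ : Unit) => u)) (Sum.inr l)

lemma st_digit {N n i : ℕ} {κ u : ℝ} (hκ : 0 ≤ κ) (h1 : i * κ ≤ u)
    (h2 : u ≤ (i + 1) * κ - (1 / 2) ^ n) (l : Fin (N + 1)) :
    st n (l * κ) u = if (l : ℕ) ≤ i then 1 else 0 := by
  split_ifs with h
  · apply st_one
    have : (l : ℝ) ≤ i := by exact_mod_cast h
    nlinarith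
  · apply st_zero
    have : (i : ℝ) + 1 ≤ l := by exact_mod_cast not_le.mp h
    nlinarith

lemma sum_digit {N i : ℕ} (hi : i < N) :
    ∑ l : Fin (N + 1), (if (l : ℕ) ≤ i then (1 : ℝ) else 0) = i + 1 := by
  rw [Fin.sum_univ_eq_sum_range (fun l => if l ≤ i then (1 : ℝ) else 0) (N + 1),
    ← Finset.sum_filter]
  have : Finset.filter (fun l => l ≤ i) (Finset.range (N + 1)) = Finset.range (i + 1) := by
    ext l; simp; omega
  rw [this]; simp

/-- Both digits and the remainder of one coordinate. -/
lemma digits_gadget {B : ℝ} (hB : 4 ≤ B) (N n : ℕ) (hN : 1 ≤ N) (u : X → ℝ) :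
    ∃ T : (Fin (N + 1) ⊕ Fin (N + 1)) ⊕ Unit → X → ℝ,
      Reach B (3 * N + 4) (fun _ : Unit => u) (2 * (n + 3)) T ∧
      ∀ x (i j : ℕ), i < N → j < N → (i / N + j / N ^ 2 : ℝ) ≤ u x →
        u x ≤ i / N + (j + 1) / N ^ 2 - (1 / 2) ^ n →
        (∀ l, T (Sum.inl (Sum.inl l)) x = if (l : ℕ) ≤ i then 1 else 0) ∧
        (∀ l, T (Sum.inl (Sum.inr l)) x = if (l : ℕ) ≤ j then 1 else 0) ∧
        T (Sum.inr ()) x = u x - (i / N + j / N ^ 2) := by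
  have hN0 : (1 : ℝ) ≤ N := by exact_mod_cast hN
  have hNpos : (0 : ℝ) < N := by linarith
  have hκ1 : (1 / N : ℝ) ≤ 1 := by rw [div_le_one hNpos]; exact hN0
  have hκ2 : (1 / N ^ 2 : ℝ) ≤ 1 := by rw [div_le_one (by positivity)]; nlinarith
  have hNκ : (N * (1 / N) : ℝ) ≤ 1 := by rw [mul_one_div_cancel hNpos.ne']
  have hNκ2 : (N * (1 / N ^ 2) : ℝ) ≤ 1 := by
    rw [mul_one_div, div_le_one (by positivity)]; nlinarith
  have s1 := stair hB N n (1 / N) (by positivity) hNκ hκ1 u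
  set v : X → ℝ := fun x => u x + 1 / N - 1 / N * ∑ l : Fin (N + 1), st n (l * (1 / N)) (u x)
    with hv
  have s2 := stair hB N n (1 / N ^ 2) (by positivity) hNκ2 hκ2 v
  have c1 := (Reach.carry (B := B) (m := N + 1) (L := n + 3)
    (fun (l : Fin (N + 1)) x => st n (l * (1 / N)) (u x)) (by simp) (by linarith)).source
      (G := Sum.elim (fun (l : Fin (N + 1)) x => st n (l * (1 / N)) (u x)) (fun (_ : Unit) => v))
      Sum.inl (fun _ => rfl)
  have s2' := s2.source
      (G := Sum.elim (fun (l : Fin (N + 1)) x => st n (l * (1 / N)) (u x)) (fun (_ : Unit) => v))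
      Sum.inr (fun _ => rfl)
  have r := (s1.mono (m' := 3 * N + 4) le_rfl (by omega)).trans
    ((c1.par s2').mono (m' := 3 * N + 4) le_rfl (by omega))
  have r' := r.reindex (fun k : (Fin (N + 1) ⊕ Fin (N + 1)) ⊕ Unit =>
    Sum.elim (Sum.elim (fun l => Sum.inl l) (fun l => Sum.inr (Sum.inl l)))
      (fun t => Sum.inr (Sum.inr t)) k)
  refine ⟨_, by rw [two_mul]; exact r', ?_⟩
  intro x i j hi hj h1 h2
  have hδ : (0 : ℝ) < (1 / 2) ^ n := by positivity
  have hj1 : ((j : ℝ) + 1) / N ^ 2 ≤ 1 / N := by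
    rw [div_le_div_iff₀ (by positivity) hNpos]
    have : (j : ℝ) + 1 ≤ N := by exact_mod_cast hj
    nlinarith
  have hj0 : (0 : ℝ) ≤ j / N ^ 2 := by positivity
  have d1 : ∀ l : Fin (N + 1), st n (l * (1 / N)) (u x) = if (l : ℕ) ≤ i then 1 else 0 := by
    refine st_digit (by positivity) ?_ ?_
    · rw [mul_one_div]; linarith
    · rw [mul_one_div, add_div]; linarith
  have hvx : v x = u x - i / N := by
    simp only [hv, d1]
    rw [sum_digit hi]; ring
  have d2 : ∀ l : Fin (N + 1), st n (l * (1 / N ^ 2)) (v x) = if (l : ℕ) ≤ j then 1 else 0 := by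
    refine st_digit (by positivity) ?_ ?_
    · rw [mul_one_div, hvx]; linarith
    · rw [mul_one_div, hvx]; linarith
  refine ⟨fun l => d1 l, fun l => d2 l, ?_⟩
  simp only [Sum.elim_inr, d2]
  rw [sum_digit hj, hvx]; ring

lemma ind_diff {N : ℕ} (l i : Fin N) :
    ((if ((l.castSucc : Fin (N + 1)) : ℕ) ≤ i then (1 : ℝ) else 0) -
      (if ((l.succ : Fin (N + 1)) : ℕ) ≤ i then (1 : ℝ) else 0)) = if l = i then 1 else 0 := by
  simp only [Fin.val_castSucc, Fin.val_succ, Fin.ext_iff]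
  split_ifs <;> first | omega | norm_num

lemma and_relu {d : ℕ} (N : ℕ) (I I' : Fin d → Fin N) :
    max (∑ i, (if I' i = I i then (1 : ℝ) else 0) - (d - 1)) 0 = if I' = I then 1 else 0 := by
  split_ifs with h
  · subst h; simp
  · apply max_eq_right
    obtain ⟨k, hk⟩ : ∃ k, I' k ≠ I k := by
      by_contra hcon; push Not at hcon; exact h (funext hcon)
    have : ∑ i, (if I' i = I i then (1 : ℝ) else 0) ≤ ∑ i, (1 - if i = k then (1 : ℝ) else 0) := by
      apply Finset.sum_le_sum
      intro i _
      by_cases hi : i = k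
      · subst hi; simp [hk]
      · simp [hi]; split_ifs <;> norm_num
    have h2 : ∑ i : Fin d, (1 - if i = k then (1 : ℝ) else 0) = d - 1 := by
      simp [Finset.sum_sub_distrib]
    linarith

/-- Extraction of cell-dependent coefficients and of the local coordinates. -/
lemma local_gadget {A B : ℝ} (hA : 0 ≤ A) (N n d : ℕ) (hN : 1 ≤ N) (hB : 4 ≤ B)
    (hBd : 3 * (d : ℝ) + 1 ≤ B) (hBA : 3 * A ≤ B) {W : Type} [Fintype W]
    (c : W → (Fin d → Fin N) → (Fin d → Fin N) → ℝ) (hc0 : ∀ w I J, 0 ≤ c w I J)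
    (hcA : ∀ w I J, c w I J ≤ A) (u : Fin d → X → ℝ) :
    ∃ T : W ⊕ Fin d → X → ℝ,
      Reach B (d * (3 * N + 4) + (2 + Fintype.card W) * N ^ d + d) u (2 * (n + 3) + 3) T ∧
      ∀ x (I J : Fin d → Fin N),
        (∀ i, ((I i : ℕ) / N + (J i : ℕ) / N ^ 2 : ℝ) ≤ u i x) →
        (∀ i, u i x ≤ (I i : ℕ) / N + ((J i : ℕ) + 1) / N ^ 2 - (1 / 2) ^ n) →
        (∀ w, T (Sum.inl w) x = c w I J) ∧
        (∀ i, T (Sum.inr i) x = u i x - ((I i : ℕ) / N + (J i : ℕ) / N ^ 2)) := by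
  classical
  have h := fun i => digits_gadget hB N n hN (u i)
  choose D hD hDs using h
  have r1 := Reach.sigma (fun i => (hD i).source (G := u) (fun _ => i) (fun _ => rfl))
  simp only [Finset.sum_const, Finset.card_univ, Fintype.card_fin, smul_eq_mul] at r1
  set m := d * (3 * N + 4) + (2 + Fintype.card W) * N ^ d + d with hm
  replace r1 := r1.mono (m' := m) le_rfl (by omega)
  set S : (Σ _ : Fin d, (Fin (N + 1) ⊕ Fin (N + 1)) ⊕ Unit) → X → ℝ := fun p => D p.1 p.2 with hS
  -- conjunctions
  let P : (Fin d → Fin N) → X → ℝ := fun I x =>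
    (∑ i, (D i (Sum.inl (Sum.inl (I i).castSucc)) x - D i (Sum.inl (Sum.inl (I i).succ)) x))
      - (d - 1)
  let Q : (Fin d → Fin N) → X → ℝ := fun I x =>
    (∑ i, (D i (Sum.inl (Sum.inr (I i).castSucc)) x - D i (Sum.inl (Sum.inr (I i).succ)) x))
      - (d - 1)
  let R : Fin d → X → ℝ := fun i => D i (Sum.inr ())
  have hLin : ∀ (q q' : Fin d → (Fin (N + 1) ⊕ Fin (N + 1)) ⊕ Unit),
      Lin B S (fun x => (∑ i, (D i (q i) x - D i (q' i) x)) - (d - 1)) := by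
    intro q q'
    have h1 : ∀ i ∈ (Finset.univ : Finset (Fin d)),
        Lin 2 S (fun x => D i (q i) x - D i (q' i) x) := by
      intro i _
      have := (Lin.reg S ⟨i, q i⟩).add ((Lin.reg S ⟨i, q' i⟩).smul (-1))
      refine (this.mono (by norm_num)).congr ?_
      intro x; simp [hS]; ring
    have h2 := (Lin.fsum _ _ h1).add (Lin.const S (-((d : ℝ) - 1)))
    refine (h2.mono ?_).congr (fun x => by ring)
    rw [abs_neg]
    have : |(d : ℝ) - 1| ≤ d + 1 := by
      rw [abs_le]; constructor <;> linarith [(d.cast_nonneg : (0 : ℝ) ≤ d)]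
    simp
    linarith
  have hcardS : Fintype.card (Σ _ : Fin d, (Fin (N + 1) ⊕ Fin (N + 1)) ⊕ Unit) ≤ m := by
    simp only [Fintype.card_sigma, Fintype.card_sum, Fintype.card_fin, Fintype.card_unit,
      Finset.sum_const, Finset.card_univ, smul_eq_mul]
    have : d * (N + 1 + (N + 1) + 1) ≤ d * (3 * N + 4) := Nat.mul_le_mul_left _ (by omega)
    omega
  have r2 := r1.step (T := Sum.elim (Sum.elim P Q) R) hcardS (by
    rintro ((I | I) | i)
    · exact hLin _ _
    · exact hLin _ _
    · exact Lin.reg' (by linarith) S ⟨i, Sum.inr ()⟩)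
  let E : W × (Fin d → Fin N) → X → ℝ := fun p x =>
    (∑ I, c p.1 I p.2 * max (P I x) 0) + A * max (Q p.2 x) 0 - A
  have r3 := r2.step (T := Sum.elim E R) (by
      simp only [Fintype.card_sum, Fintype.card_pi, Fintype.card_fin, Finset.prod_const,
        Finset.card_univ]
      have : (2 + Fintype.card W) * N ^ d = N ^ d + N ^ d + Fintype.card W * N ^ d := by ring
      omega) (by
    rintro (⟨w, J⟩ | i)
    · have h1 := (Lin.sum_relu P (fun I => c w I J) hA (fun I => by
        rw [abs_of_nonneg (hc0 w I J)]; exact hcA w I J)).embed (G := Sum.elim (Sum.elim P Q) R)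
          (fun I => Sum.inl (Sum.inl I))
          (Sum.inl_injective.comp Sum.inl_injective) (fun _ => rfl)
      have h2 := (Lin.relu (Sum.elim (Sum.elim P Q) R) (Sum.inl (Sum.inr J))).smul A
      have h3 := (h1.add h2).add (Lin.const _ (-A))
      refine (h3.mono ?_).congr (fun x => ?_)
      · rw [abs_neg, abs_of_nonneg hA]; linarith
      · simp [E]; ring
    · exact Lin.reg' (by linarith) (Sum.elim (Sum.elim P Q) R) (Sum.inr i))
  have r4 := r3.step (T := Sum.elim (fun (w : W) x => ∑ J, max (E (w, J) x) 0) R) (by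
      simp only [Fintype.card_sum, Fintype.card_pi, Fintype.card_fin, Finset.prod_const,
        Finset.card_univ, Fintype.card_prod]
      have : (2 + Fintype.card W) * N ^ d = N ^ d + N ^ d + Fintype.card W * N ^ d := by ring
      omega) (by
    rintro (w | i)
    · have h1 := (Lin.sum_relu (fun J => E (w, J)) (fun _ => (1 : ℝ)) zero_le_one
        (by simp)).embed (G := Sum.elim E R) (fun J => Sum.inl (w, J))
        (Sum.inl_injective.comp (Prod.mk_right_injective w)) (fun _ => rfl)
      refine (h1.mono (by linarith)).congr (fun x => by simp)
    · exact Lin.reg' (by linarith) (Sum.elim E R) (Sum.inr i))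
  refine ⟨_, r4, ?_⟩
  intro x I J hlo hhi
  have hd := fun i => hDs i x (I i) (J i) (I i).2 (J i).2 (hlo i) (hhi i)
  have hP : ∀ I', max (P I' x) 0 = if I' = I then 1 else 0 := by
    intro I'
    rw [← and_relu]
    simp only [P]
    congr 3
    funext i
    rw [(hd i).1, (hd i).1, ind_diff]
  have hQ : ∀ J', max (Q J' x) 0 = if J' = J then 1 else 0 := by
    intro I'
    rw [← and_relu]
    simp only [Q]
    congr 3
    funext i
    rw [(hd i).2.1, (hd i).2.1, ind_diff]
  refine ⟨fun w => ?_, fun i => (hd i).2.2⟩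
  simp only [Sum.elim_inl, E, hP, hQ]
  rw [Finset.sum_eq_single J]
  · simp
    exact hc0 w I J
  · intro J' _ hJ'
    simp [hJ']
    exact hcA w I J'
  · simp

end digits
end DNN

namespace DNN

section taylor
variable {d : ℕ}

/-- Iterated partial derivative along a list of coordinates. -/
def Dl (l : List (Fin d)) (f : (Fin d → ℝ) → ℝ) : (Fin d → ℝ) → ℝ :=
  l.foldr (fun i g => pder i g) f

lemma contDiff_pder {k : ℕ} {f : (Fin d → ℝ) → ℝ} (i : Fin d)
    (hf : ContDiff ℝ ((k + 1 : ℕ) : ℕ∞) f) : ContDiff ℝ (k : ℕ∞) (pder i f) := by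
  have h : ContDiff ℝ (k : ℕ∞) (fderiv ℝ f) := hf.fderiv_right (by norm_cast)
  exact h.clm_apply contDiff_const

lemma contDiff_Dl {k : ℕ} {f : (Fin d → ℝ) → ℝ} (l : List (Fin d))
    (hf : ContDiff ℝ ((k + l.length : ℕ) : ℕ∞) f) : ContDiff ℝ (k : ℕ∞) (Dl l f) := by
  induction l generalizing k with
  | nil => exact hf
  | cons i l ih =>
    refine contDiff_pder i (ih ?_)
    convert hf using 3
    simp; ring

lemma pder_comm {f : (Fin d → ℝ) → ℝ} (hf : ContDiff ℝ ((2 : ℕ) : ℕ∞) f) (i j : Fin d) :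
    pder i (pder j f) = pder j (pder i f) := by
  have h1 : ContDiff ℝ ((1 : ℕ) : ℕ∞) (fderiv ℝ f) := hf.fderiv_right (by norm_cast)
  have hd : Differentiable ℝ (fderiv ℝ f) := h1.differentiable (by norm_num)
  have key : ∀ (i j : Fin d) x, pder i (pder j f) x
      = fderiv ℝ (fderiv ℝ f) x (Pi.single i 1) (Pi.single j 1) := by
    intro i j x
    unfold pder
    rw [fderiv_clm_apply (hd x) (differentiableAt_const _)]
    simp
  funext x
  rw [key, key]
  have hs : IsSymmSndFDerivAt ℝ f x := by
    apply ContDiffAt.isSymmSndFDerivAt (n := ((2 : ℕ) : ℕ∞)) hf.contDiffAt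
    simp
  exact hs _ _

lemma Dl_perm {l l' : List (Fin d)} (h : l.Perm l') {f : (Fin d → ℝ) → ℝ}
    (hf : ContDiff ℝ (l.length : ℕ∞) f) : Dl l f = Dl l' f := by
  induction h with
  | nil => rfl
  | cons i h ih =>
    have : Dl _ f = Dl _ f := ih (hf.of_le (by simp))
    simp only [Dl, List.foldr_cons] at this ⊢
    rw [this]
  | swap i j l =>
    have : ContDiff ℝ ((2 : ℕ) : ℕ∞) (Dl l f) := by
      apply contDiff_Dl
      convert hf using 3
      simp; ring
    exact pder_comm this j i
  | trans h h' ih ih' =>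
    rw [ih hf, ih' (by rwa [← h.length_eq])]

lemma foldr_iter (α : Fin d → ℕ) (L : List (Fin d)) (f : (Fin d → ℝ) → ℝ) :
    L.foldr (fun i g => (pder i)^[α i] g) f = Dl (L.flatMap fun i => List.replicate (α i) i) f := by
  have h1 : ∀ (i : Fin d) (n : ℕ) (g : (Fin d → ℝ) → ℝ),
      (pder i)^[n] g = (List.replicate n i).foldr (fun i g => pder i g) g := by
    intro i n g
    induction n with
    | zero => rfl
    | succ n ih => rw [Function.iterate_succ_apply', ih, List.replicate_succ, List.foldr_cons]
  induction L with
  | nil => rfl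
  | cons i L ih =>
    rw [List.foldr_cons, ih, h1]
    simp only [Dl, List.flatMap_cons, List.foldr_append]

lemma pderm_eq (l : List (Fin d)) {f : (Fin d → ℝ) → ℝ}
    (hf : ContDiff ℝ (l.length : ℕ∞) f) : pderm (fun i => l.count i) f = Dl l f := by
  unfold pderm
  rw [foldr_iter]
  symm
  apply Dl_perm _ hf
  rw [List.perm_iff_count]
  intro i
  rw [List.count_flatMap]
  simp only [Function.comp_def, List.count_replicate]
  have h2 : ((List.finRange d).map fun j => if (j == i) = true then List.count j l else 0).sum
      = ∑ j : Fin d, if (j == i) = true then List.count j l else 0 := by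
    rw [← List.ofFn_eq_map, List.sum_ofFn]
  rw [h2]
  simp

lemma hasDerivAt_line {g : (Fin d → ℝ) → ℝ} (hg : ContDiff ℝ ((1 : ℕ) : ℕ∞) g)
    (p z : Fin d → ℝ) (t : ℝ) :
    HasDerivAt (fun t : ℝ => g (p + t • z)) (∑ i, z i * pder i g (p + t • z)) t := by
  have h1 : HasFDerivAt g (fderiv ℝ g (p + t • z)) (p + t • z) :=
    ((hg.differentiable (by norm_num)) _).hasFDerivAt
  have h2 : HasDerivAt (fun t : ℝ => p + t • z) z t := by
    have := ((hasDerivAt_id t).smul_const z).const_add p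
    simpa using this
  have h3 := h1.comp_hasDerivAt t h2
  have hz : z = ∑ i, z i • (Pi.single i (1 : ℝ) : Fin d → ℝ) := by
    funext j; simp [Finset.sum_apply, Pi.single_apply]
  have e : ∑ i, z i * pder i g (p + t • z) = fderiv ℝ g (p + t • z) z := by
    have e2 : ∀ F : (Fin d → ℝ) →L[ℝ] ℝ,
        ∑ i, z i * F (Pi.single i (1 : ℝ)) = F z := by
      intro F
      conv_rhs => rw [hz]
      rw [map_sum]
      refine Finset.sum_congr rfl fun i _ => ?_
      rw [map_smul]; rfl
    exact e2 _
  rw [e]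
  exact h3

lemma taylor_abs {C : ℝ} (n : ℕ) (G : ℕ → ℝ → ℝ)
    (hG : ∀ k < n, ∀ t, HasDerivAt (G k) (G (k + 1) t) t)
    (hC : ∀ t ∈ Set.Icc (0 : ℝ) 1, |G n t - G n 0| ≤ C) :
    ∀ t ∈ Set.Icc (0 : ℝ) 1,
      |G 0 t - ∑ k ∈ Finset.range (n + 1), G k 0 * t ^ k / (k.factorial : ℝ)| ≤ C := by
  induction n generalizing G with
  | zero => simpa using hC
  | succ n ih =>
    intro t ht
    have ih' := ih (fun k => G (k + 1)) (fun k hk => hG (k + 1) (by omega)) hC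
    let φ : ℝ → ℝ := fun t => G 0 t - ∑ k ∈ Finset.range (n + 2), G k 0 * t ^ k / (k.factorial : ℝ)
    have hφ : ∀ t, HasDerivAt φ (G 1 t - ∑ k ∈ Finset.range (n + 1),
        G (k + 1) 0 * t ^ k / (k.factorial : ℝ)) t := by
      intro t
      refine (hG 0 (by omega) t).sub ?_
      have : HasDerivAt (fun t : ℝ => ∑ k ∈ Finset.range (n + 1 + 1),
          G k 0 * t ^ k / (k.factorial : ℝ)) (∑ k ∈ Finset.range (n + 1 + 1),
          G k 0 * (k * t ^ (k - 1)) / (k.factorial : ℝ)) t := by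
        apply HasDerivAt.fun_sum
        intro k _
        exact ((hasDerivAt_pow k t).const_mul _).div_const _
      have e : ∑ k ∈ Finset.range (n + 1), G (k + 1) 0 * t ^ k / (k.factorial : ℝ)
          = ∑ k ∈ Finset.range (n + 1 + 1), G k 0 * (k * t ^ (k - 1)) / (k.factorial : ℝ) := by
        rw [Finset.sum_range_succ' _ (n + 1)]
        simp only [Nat.cast_zero, zero_mul, mul_zero, zero_div, add_zero]
        refine Finset.sum_congr rfl fun k _ => ?_
        rw [Nat.factorial_succ]
        push_cast
        have : ((k : ℝ) + 1) ≠ 0 := by positivity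
        have : (k.factorial : ℝ) ≠ 0 := by positivity
        field_simp
      rw [e]
      exact this
    have h0 : φ 0 = 0 := by
      simp only [φ]
      rw [Finset.sum_range_succ' _ (n + 1)]
      simp
    have hC0 : 0 ≤ C := (abs_nonneg _).trans (hC 0 (by simp))
    have := (convex_Icc (0 : ℝ) 1).norm_image_sub_le_of_norm_hasDerivWithin_le
      (fun t _ => (hφ t).hasDerivWithinAt) (fun t ht => ih' t ht)
      (Set.left_mem_Icc.mpr zero_le_one) ht
    rw [h0, sub_zero, sub_zero, Real.norm_eq_abs, Real.norm_eq_abs, abs_of_nonneg ht.1] at this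
    refine this.trans ?_
    nlinarith [ht.2]

/-- Sum over words of length `k`. -/
def wsum (f : (Fin d → ℝ) → ℝ) (z : Fin d → ℝ) (k : ℕ) (x : Fin d → ℝ) : ℝ :=
  ∑ w : Fin k → Fin d, (∏ j, z (w j)) * Dl (List.ofFn w) f x

lemma wsum_deriv {n k : ℕ} {f : (Fin d → ℝ) → ℝ} (hf : ContDiff ℝ (n : ℕ∞) f) (hk : k < n)
    (p z : Fin d → ℝ) (t : ℝ) :
    HasDerivAt (fun t : ℝ => wsum f z k (p + t • z)) (wsum f z (k + 1) (p + t • z)) t := by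
  have h1 : HasDerivAt (fun t : ℝ => wsum f z k (p + t • z))
      (∑ w : Fin k → Fin d, (∏ j, z (w j)) *
        ∑ i, z i * pder i (Dl (List.ofFn w) f) (p + t • z)) t := by
    unfold wsum
    apply HasDerivAt.fun_sum
    intro w _
    refine (hasDerivAt_line ?_ p z t).const_mul _
    apply contDiff_Dl
    refine hf.of_le ?_
    rw [List.length_ofFn]
    norm_cast
    omega
  convert h1 using 1
  unfold wsum
  rw [← (Fin.consEquiv (fun _ : Fin (k + 1) => Fin d)).sum_comp, Fintype.sum_prod_type,
    Finset.sum_comm]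
  refine Finset.sum_congr rfl fun w _ => ?_
  rw [Finset.mul_sum]
  refine Finset.sum_congr rfl fun i _ => ?_
  have h3 : (Fin.consEquiv (fun _ : Fin (k + 1) => Fin d)) (i, w)
    = (Fin.cons i w : Fin (k + 1) → Fin d) := rfl
  rw [h3, Fin.prod_univ_succ, List.ofFn_succ]
  simp only [Fin.cons_zero, Fin.cons_succ, Dl, List.foldr_cons]
  ring

lemma cube_zero {a : ℝ} (ha : 1 ≤ a) : (0 : Fin d → ℝ) ∈ cube a d :=
  fun i => ⟨by simp; linarith, by simp; linarith⟩

lemma holder_bounds {a β K : ℝ} (ha : 1 ≤ a) (hd : 0 < d) {f : (Fin d → ℝ) → ℝ}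
    (hf : memHolder a d β K f) :
    (∀ l : List (Fin d), l.length ≤ ⌊β⌋₊ → (l.length : ℝ) < β → ∀ x ∈ cube a d, |Dl l f x| ≤ K) ∧
    (∀ l : List (Fin d), l.length = ⌊β⌋₊ → ∀ x₁ ∈ cube a d, ∀ x₂ ∈ cube a d, x₁ ≠ x₂ →
      |Dl l f x₁ - Dl l f x₂| ≤ K * ‖x₁ - x₂‖ ^ (β - (⌊β⌋₊ : ℝ))) := by
  obtain ⟨hcd, S, H, hS, hH, hsum⟩ := hf
  have hS0 : ∀ α ∈ Finset.univ.filter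
        (fun α : Fin d → Fin (⌊β⌋₊ + 1) => ((∑ i, (α i : ℕ) : ℕ) : ℝ) < β), 0 ≤ S α := by
    intro α hα
    rw [Finset.mem_filter] at hα
    exact (abs_nonneg _).trans (hS α hα.2 0 (cube_zero ha))
  have hH0 : ∀ α ∈ Finset.univ.filter
        (fun α : Fin d → Fin (⌊β⌋₊ + 1) => (∑ i, (α i : ℕ)) = ⌊β⌋₊), 0 ≤ H α := by
    intro α hα
    rw [Finset.mem_filter] at hα
    have h1 : (fun _ => 1 : Fin d → ℝ) ∈ cube a d := fun i => ⟨by linarith, ha⟩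
    have hne : (fun _ => 1 : Fin d → ℝ) ≠ 0 := by
      intro h; have := congrFun h ⟨0, hd⟩; simp at this
    have h2 := (abs_nonneg _).trans (hH α hα.2 _ h1 0 (cube_zero ha) hne)
    have h3 : 0 < ‖(fun _ => 1 : Fin d → ℝ) - 0‖ ^ (β - (⌊β⌋₊ : ℝ)) :=
      Real.rpow_pos_of_pos (norm_pos_iff.mpr (by simpa using hne)) _
    exact nonneg_of_mul_nonneg_left h2 h3
  have hsumcount : ∀ l : List (Fin d), ∑ i, l.count i = l.length := by
    intro l
    have := Multiset.sum_count_eq_card (s := (Finset.univ : Finset (Fin d)))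
      (m := (l : Multiset (Fin d))) (fun a _ => Finset.mem_univ a)
    simpa using this
  have hα : ∀ l : List (Fin d), l.length ≤ ⌊β⌋₊ → ∃ α : Fin d → Fin (⌊β⌋₊ + 1),
      (fun i => (α i : ℕ)) = fun i => l.count i := by
    intro l hl
    exact ⟨fun i => ⟨l.count i, Nat.lt_succ_of_le (List.count_le_length.trans hl)⟩, rfl⟩
  have hcl : ∀ l : List (Fin d), l.length ≤ ⌊β⌋₊ → ContDiff ℝ (l.length : ℕ∞) f := by
    intro l hl
    exact hcd.of_le (by exact_mod_cast hl)
  constructor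
  · intro l hl hlβ x hx
    obtain ⟨α, hαe⟩ := hα l hl
    have hsα : ∑ i, (α i : ℕ) = l.length := by
      rw [← hsumcount l]; exact Finset.sum_congr rfl fun i _ => congrFun hαe i
    have h1 := hS α (by rw [hsα]; exact hlβ) x hx
    rw [hαe, pderm_eq l (hcl l hl)] at h1
    refine h1.trans ?_
    have h2 := Finset.single_le_sum hS0 (a := α) (by
      rw [Finset.mem_filter]; exact ⟨Finset.mem_univ _, by rw [hsα]; exact hlβ⟩)
    have h3 := Finset.sum_nonneg hH0
    linarith
  · intro l hl x hx y hy hxy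
    obtain ⟨α, hαe⟩ := hα l hl.le
    have hsα : ∑ i, (α i : ℕ) = ⌊β⌋₊ := by
      refine Eq.trans ?_ ((hsumcount l).trans hl)
      exact Finset.sum_congr rfl fun i _ => congrFun hαe i
    have h1 := hH α hsα x hx y hy hxy
    rw [hαe, pderm_eq l (hcl l hl.le)] at h1
    refine h1.trans (mul_le_mul_of_nonneg_right ?_ (Real.rpow_nonneg (norm_nonneg _) _))
    have h2 := Finset.single_le_sum hH0 (a := α) (by
      rw [Finset.mem_filter]; exact ⟨Finset.mem_univ _, hsα⟩)
    have h3 := Finset.sum_nonneg hS0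
    linarith

lemma cube_line {a : ℝ} {p y : Fin d → ℝ} (hp : p ∈ cube a d) (hy : y ∈ cube a d) {t : ℝ}
    (ht : t ∈ Set.Icc (0 : ℝ) 1) : p + t • (y - p) ∈ cube a d := by
  intro i
  have h1 := hp i
  have h2 := hy i
  simp only [Set.mem_Icc, Pi.add_apply, Pi.smul_apply, Pi.sub_apply, smul_eq_mul] at *
  constructor <;> nlinarith

lemma holder_bound_all {a β K : ℝ} (ha : 1 ≤ a) (hd : 0 < d) (hβ : 0 < β) (hK : 1 ≤ K)
    {f : (Fin d → ℝ) → ℝ}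
    (hf : memHolder a d β K f) (l : List (Fin d)) (hl : l.length ≤ ⌊β⌋₊) :
    ∀ x ∈ cube a d, |Dl l f x| ≤ 2 * K := by
  intro x hx
  obtain ⟨hb, hh⟩ := holder_bounds ha hd hf
  have hfl : (⌊β⌋₊ : ℝ) ≤ β := Nat.floor_le hβ.le
  by_cases hlt : (l.length : ℝ) < β
  · linarith [hb l hl hlt x hx]
  · have hl' : (l.length : ℝ) ≤ ⌊β⌋₊ := by exact_mod_cast hl
    have hle : (⌊β⌋₊ : ℝ) = β := by linarith
    have hln : l.length = ⌊β⌋₊ := by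
      have : (l.length : ℝ) = ⌊β⌋₊ := by linarith
      exact_mod_cast this
    cases l with
    | nil => simp at hlt; linarith
    | cons i l =>
      have hlen : l.length + 1 = ⌊β⌋₊ := by simpa using hln
      have hlenR : (l.length : ℝ) + 1 = ⌊β⌋₊ := by exact_mod_cast hlen
      have hg : ContDiff ℝ ((1 : ℕ) : ℕ∞) (Dl l f) := by
        apply contDiff_Dl
        refine hf.1.of_le ?_
        norm_cast; omega
      have hp : (fun _ => 0 : Fin d → ℝ) ∈ cube a d := cube_zero ha
      have hy : (Pi.single i 1 : Fin d → ℝ) ∈ cube a d := by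
        intro j
        by_cases hj : j = i
        · subst hj; simp; constructor <;> linarith
        · simp [hj]; linarith
      -- use the segment from `-e_i` to `e_i`
      have hq : (-Pi.single i 1 : Fin d → ℝ) ∈ cube a d := by
        intro j
        have := hy j
        simp only [Set.mem_Icc, Pi.neg_apply] at *
        constructor <;> linarith
      have hder := fun t => hasDerivAt_line hg (-Pi.single i 1 : Fin d → ℝ)
        ((Pi.single i 1 : Fin d → ℝ) - -Pi.single i 1) t
      obtain ⟨ξ, hξ, hξe⟩ := exists_hasDerivAt_eq_slope _ _ (zero_lt_one (α := ℝ))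
        (fun t _ => (hder t).continuousAt.continuousWithinAt) (fun t _ => hder t)
      have hs : ∀ g : Fin d → ℝ, ∑ j, ((Pi.single i (1 : ℝ) : Fin d → ℝ) - -(Pi.single i (1 : ℝ) : Fin d → ℝ)) j * g j
          = 2 * g i := by
        intro g
        rw [Finset.sum_eq_single i]
        · simp only [Pi.sub_apply, Pi.neg_apply, Pi.single_eq_same]; ring
        · intro j _ hj; simp [hj]
        · simp
      rw [hs] at hξe
      have hmem : ∀ t ∈ Set.Icc (0 : ℝ) 1, (-Pi.single i 1 : Fin d → ℝ) +
        t • ((Pi.single i 1 : Fin d → ℝ) - -Pi.single i 1) ∈ cube a d :=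
        fun t ht => cube_line hq hy ht
      have b1 := hb l (by omega) (by linarith) _ (hmem 1 (by simp))
      have b0 := hb l (by omega) (by linarith) _ (hmem 0 (by simp))
      set q := (-Pi.single i 1 : Fin d → ℝ) + ξ • ((Pi.single i 1 : Fin d → ℝ) - -Pi.single i 1)
        with hqdef
      have hqm : q ∈ cube a d := hmem ξ ⟨hξ.1.le, hξ.2.le⟩
      have hq1 : |pder i (Dl l f) q| ≤ K := by
        rw [abs_le] at b1 b0 ⊢
        rw [sub_zero, div_one] at hξe
        constructor <;> linarith
      by_cases hxq : x = q
      · rw [hxq]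
        have : Dl (i :: l) f q = pder i (Dl l f) q := rfl
        rw [this]; linarith
      · have h3 := hh (i :: l) hln x hx q hqm hxq
        rw [hle, sub_self, Real.rpow_zero, mul_one] at h3
        have : Dl (i :: l) f q = pder i (Dl l f) q := rfl
        rw [this] at h3
        rw [abs_le] at hq1 h3 ⊢
        constructor <;> linarith

theorem taylor {a β K : ℝ} (ha : 1 ≤ a) (hd : 0 < d) (hβ : 0 < β) (hK : 1 ≤ K)
    {f : (Fin d → ℝ) → ℝ} (hf : memHolder a d β K f) :
    ∃ c : (Σ k : Fin (⌊β⌋₊ + 1), Fin k → Fin d) → (Fin d → ℝ) → ℝ,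
      (∀ w, ∀ p ∈ cube a d, |c w p| ≤ 2 * K) ∧
      ∀ p ∈ cube a d, ∀ y ∈ cube a d,
        |f y - ∑ w, c w p * ∏ j, (y (w.2 j) - p (w.2 j))|
          ≤ (d : ℝ) ^ ⌊β⌋₊ * K * ‖y - p‖ ^ β := by
  obtain ⟨hb, hh⟩ := holder_bounds ha hd hf
  have hfl : (⌊β⌋₊ : ℝ) ≤ β := Nat.floor_le hβ.le
  refine ⟨fun w p => Dl (List.ofFn w.2) f p / (w.1 : ℕ).factorial, ?_, ?_⟩
  · intro w p hp
    have h1 := holder_bound_all ha hd hβ hK hf (List.ofFn w.2)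
      (by simpa using Nat.lt_succ_iff.mp w.1.2) p hp
    have h2 : (1 : ℝ) ≤ (w.1 : ℕ).factorial := by exact_mod_cast Nat.factorial_pos _
    rw [abs_div, abs_of_pos (by linarith : (0 : ℝ) < (w.1 : ℕ).factorial)]
    exact (div_le_self (abs_nonneg _) h2).trans h1
  · intro p hp y hy
    set z := y - p with hz
    have key := taylor_abs (C := (d : ℝ) ^ ⌊β⌋₊ * K * ‖z‖ ^ β) ⌊β⌋₊
      (fun k t => wsum f z k (p + t • z)) (fun k hk t => wsum_deriv hf.1 hk p z t) ?_ 1 (by simp)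
    · have e0 : wsum f z 0 (p + (1 : ℝ) • z) = f y := by
        simp [wsum, Dl, hz]
      rw [e0] at key
      convert key using 3
      rw [Fintype.sum_sigma, Finset.sum_range]
      refine Finset.sum_congr rfl fun k _ => ?_
      simp only [wsum, zero_smul, add_zero, one_pow, mul_one]
      rw [Finset.sum_div]
      refine Finset.sum_congr rfl fun w _ => ?_
      simp only [hz, Pi.sub_apply]
      ring
    · intro t ht
      have hnn : 0 ≤ (d : ℝ) ^ ⌊β⌋₊ * K * ‖z‖ ^ β := by positivity
      by_cases h0 : t • z = 0
      · simp only [h0, zero_smul, sub_self, abs_zero]; exact hnn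
      · have hzne : z ≠ 0 := fun h => h0 (by simp [h])
        have hzpos : 0 < ‖z‖ := norm_pos_iff.mpr hzne
        simp only [wsum, zero_smul, add_zero]
        rw [← Finset.sum_sub_distrib]
        refine (Finset.abs_sum_le_sum_abs _ _).trans ?_
        have hterm : ∀ w ∈ (Finset.univ : Finset (Fin ⌊β⌋₊ → Fin d)),
            |(∏ j, z (w j)) * Dl (List.ofFn w) f (p + t • z) -
              (∏ j, z (w j)) * Dl (List.ofFn w) f p| ≤ K * ‖z‖ ^ β := by
          intro w _
          rw [← mul_sub, abs_mul]
          have h1 : |∏ j, z (w j)| ≤ ‖z‖ ^ ⌊β⌋₊ := by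
            rw [Finset.abs_prod]
            refine (Finset.prod_le_prod (fun _ _ => abs_nonneg _)
              (fun j _ => norm_le_pi_norm z (w j))).trans ?_
            simp
          have h2 := hh (List.ofFn w) (by simp) (p + t • z) (cube_line hp hy ht) p hp
            (by simpa using h0)
          rw [add_sub_cancel_left] at h2
          have h3 : ‖t • z‖ ^ (β - (⌊β⌋₊ : ℝ)) ≤ ‖z‖ ^ (β - (⌊β⌋₊ : ℝ)) := by
            apply Real.rpow_le_rpow (norm_nonneg _) _ (by linarith)
            rw [norm_smul, Real.norm_eq_abs, abs_of_nonneg ht.1]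
            nlinarith [ht.2]
          have h4 : ‖z‖ ^ β = ‖z‖ ^ ⌊β⌋₊ * ‖z‖ ^ (β - (⌊β⌋₊ : ℝ)) := by
            rw [← Real.rpow_natCast ‖z‖ ⌊β⌋₊, ← Real.rpow_add hzpos]; congr 1; ring
          calc _ ≤ ‖z‖ ^ ⌊β⌋₊ * (K * ‖z‖ ^ (β - (⌊β⌋₊ : ℝ))) := by
                refine mul_le_mul h1 (h2.trans ?_) (abs_nonneg _) (by positivity)
                exact mul_le_mul_of_nonneg_left h3 (by linarith)
            _ = K * ‖z‖ ^ β := by rw [h4]; ring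
        refine (Finset.sum_le_sum hterm).trans ?_
        simp; linarith

/-- Quantitative continuity. -/
lemma holder_cont {a β K : ℝ} (ha : 1 ≤ a) (hd : 0 < d) (hβ : 0 < β) (hK : 1 ≤ K) :
    ∃ C : ℝ, 0 < C ∧ ∀ f : (Fin d → ℝ) → ℝ, memHolder a d β K f →
      ∀ p ∈ cube a d, ∀ y ∈ cube a d, ‖y - p‖ ≤ 1 → |f y - f p| ≤ C * ‖y - p‖ ^ (min β 1) := by
  refine ⟨(d : ℝ) ^ ⌊β⌋₊ * K +
    Fintype.card (Σ k : Fin (⌊β⌋₊ + 1), Fin k → Fin d) * (2 * K), ?_, ?_⟩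
  · have : (0 : ℝ) < d := by exact_mod_cast hd
    positivity
  intro f hf p hp y hy hyp
  obtain ⟨c, hc, ht⟩ := taylor ha hd hβ hK hf
  have h1 := ht p hp y hy
  have h2 := ht p hp p hp
  rw [sub_self, norm_zero, Real.zero_rpow hβ.ne', mul_zero] at h2
  have h2' := abs_nonpos_iff.mp h2
  set h := ‖y - p‖ with hh
  have hh0 : 0 ≤ h := norm_nonneg _
  have hd1 : ∀ w : (Σ k : Fin (⌊β⌋₊ + 1), Fin k → Fin d),
      |c w p * ∏ j, (y (w.2 j) - p (w.2 j)) - c w p * ∏ j, (p (w.2 j) - p (w.2 j))| ≤ 2 * K * h := by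
    rintro ⟨⟨k, hk⟩, w⟩
    rw [← mul_sub, abs_mul]
    refine mul_le_mul (hc _ p hp) ?_ (abs_nonneg _) (by linarith)
    cases k with
    | zero => simpa using hh0
    | succ k =>
      simp only [sub_self, Finset.prod_const, Finset.card_univ, Fintype.card_fin]
      rw [zero_pow (by omega), sub_zero, Finset.abs_prod, Fin.prod_univ_succ]
      have hj : ∀ j, |y j - p j| ≤ h := fun j => norm_le_pi_norm (y - p) j
      have : ∏ i : Fin k, |y (w i.succ) - p (w i.succ)| ≤ 1 :=
        Finset.prod_le_one (fun _ _ => abs_nonneg _) (fun _ _ => (hj _).trans hyp)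
      calc _ ≤ h * 1 := mul_le_mul (hj _) this (Finset.prod_nonneg fun _ _ => abs_nonneg _) hh0
        _ = h := mul_one _
  have hsum : |∑ w, c w p * ∏ j, (y (w.2 j) - p (w.2 j))
      - ∑ w, c w p * ∏ j, (p (w.2 j) - p (w.2 j))|
      ≤ Fintype.card (Σ k : Fin (⌊β⌋₊ + 1), Fin k → Fin d) * (2 * K * h) := by
    rw [← Finset.sum_sub_distrib]
    refine (Finset.abs_sum_le_sum_abs _ _).trans ((Finset.sum_le_sum fun w _ => hd1 w).trans ?_)
    simp only [Finset.sum_const, Finset.card_univ, nsmul_eq_mul, le_refl]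
  have hm0 : 0 < min β 1 := lt_min hβ one_pos
  have e1 : h ^ β ≤ h ^ (min β 1) :=
    Real.rpow_le_rpow_of_exponent_ge_of_imp hh0 hyp (min_le_left _ _) (fun _ h => absurd h hβ.ne')
  have e2 : h ≤ h ^ (min β 1) := by
    conv_lhs => rw [← Real.rpow_one h]
    exact Real.rpow_le_rpow_of_exponent_ge_of_imp hh0 hyp (min_le_right _ _)
      (fun _ h => absurd h one_ne_zero)
  have e3 : f y - f p = (f y - ∑ w, c w p * ∏ j, (y (w.2 j) - p (w.2 j))) +
    (∑ w, c w p * ∏ j, (y (w.2 j) - p (w.2 j)) - ∑ w, c w p * ∏ j, (p (w.2 j) - p (w.2 j))) := by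
    linarith
  rw [e3]
  refine (abs_add_le _ _).trans ((add_le_add h1 hsum).trans ?_)
  rw [add_mul]
  refine add_le_add (mul_le_mul_of_nonneg_left e1 (by positivity)) ?_
  rw [mul_assoc (Fintype.card _ : ℝ)]
  refine mul_le_mul_of_nonneg_left (mul_le_mul_of_nonneg_left e2 (by linarith)) (by positivity)

end taylor
end DNN

namespace DNN

/-- `u` lies in the (slightly shrunk) cell with digits `I, J`. -/
def Good (N : ℕ) (δ u : ℝ) : Prop :=
  ∃ I J : Fin N, ((I : ℕ) / N + (J : ℕ) / N ^ 2 : ℝ) ≤ u ∧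
    u ≤ (I : ℕ) / N + ((J : ℕ) + 1) / N ^ 2 - δ

lemma Good.of_index {N k : ℕ} {δ u : ℝ} (hN : 1 ≤ N) (hk : k < N ^ 2) (h1 : (k : ℝ) ≤ u * N ^ 2)
    (h2 : (u + δ) * N ^ 2 ≤ k + 1) : Good N δ u := by
  have hN0 : (0 : ℝ) < N := by exact_mod_cast hN
  have hN2 : (0 : ℝ) < (N : ℝ) ^ 2 := by positivity
  refine ⟨⟨k / N, Nat.div_lt_of_lt_mul (by rw [← sq]; exact hk)⟩, ⟨k % N, Nat.mod_lt _ hN⟩, ?_⟩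
  have e : ((k / N : ℕ) : ℝ) / N + ((k % N : ℕ) : ℝ) / N ^ 2 = k / N ^ 2 := by
    have : (k : ℝ) = N * (k / N : ℕ) + (k % N : ℕ) := by exact_mod_cast (Nat.div_add_mod k N).symm
    rw [this]; field_simp
  have e' : ((k / N : ℕ) : ℝ) / N + (((k % N : ℕ) : ℝ) + 1) / N ^ 2 = (k + 1) / N ^ 2 := by
    rw [add_div, ← add_assoc, e, ← add_div]
  simp only
  rw [e, e']
  refine ⟨(div_le_iff₀ hN2).mpr h1, ?_⟩
  rw [le_sub_iff_add_le, le_div_iff₀ hN2]; exact h2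

lemma Good.step {N : ℕ} {δ u t : ℝ} (hN : 1 ≤ N) (hu : 0 ≤ u) (hu1 : u + δ < 1)
    (hδ : 0 < δ) (hδN : 3 * δ * N ^ 2 ≤ 1) (h : ¬ Good N δ u) (ht : δ ≤ t) (ht2 : t ≤ 2 * δ) :
    Good N δ (u + t) := by
  have hN0 : (0 : ℝ) < N := by exact_mod_cast hN
  have hN2 : (0 : ℝ) < (N : ℝ) ^ 2 := by positivity
  have hx : 0 ≤ u * (N : ℝ) ^ 2 := by positivity
  have hf := Nat.floor_le hx
  have hf' := Nat.lt_floor_add_one (u * (N : ℝ) ^ 2)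
  set k := ⌊u * (N : ℝ) ^ 2⌋₊ with hk
  have hkN : k < N ^ 2 := by
    have : (k : ℝ) < (N : ℝ) ^ 2 := by nlinarith
    exact_mod_cast this
  have h2 : (k : ℝ) + 1 < (u + δ) * N ^ 2 := by
    by_contra hc
    exact h (Good.of_index hN hkN hf (not_lt.mp hc))
  refine Good.of_index (k := k + 1) hN ?_ ?_ ?_
  · have : (k : ℝ) + 1 < (N : ℝ) ^ 2 := by nlinarith
    exact_mod_cast this
  · push_cast; nlinarith
  · push_cast; nlinarith

lemma Good.two {N : ℕ} {δ u : ℝ} (hN : 1 ≤ N) (hu : 0 ≤ u) (hu1 : u + 3 * δ < 1)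
    (hδ : 0 < δ) (hδN : 3 * δ * N ^ 2 ≤ 1) :
    ∃ s s' : Fin 3, s ≠ s' ∧ Good N δ (u + (s : ℕ) * δ) ∧ Good N δ (u + (s' : ℕ) * δ) := by
  by_cases h0 : Good N δ u
  · by_cases h1 : Good N δ (u + δ)
    · exact ⟨0, 1, by decide, by simpa using h0, by simpa using h1⟩
    · refine ⟨0, 2, by decide, by simpa using h0, ?_⟩
      have := Good.step hN (by linarith) (by linarith) hδ hδN h1 le_rfl (by linarith)
      convert this using 1
      simp; ring
  · refine ⟨1, 2, by decide, ?_, ?_⟩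
    · simpa using Good.step hN hu (by linarith) hδ hδN h0 le_rfl (by linarith)
    · simpa using Good.step hN hu (by linarith) hδ hδN h0 (by linarith : δ ≤ 2 * δ) le_rfl

/-- Index type of the Taylor monomials. -/
abbrev Wd (d q : ℕ) : Type := Σ k : Fin (q + 1), Fin k → Fin d

lemma cell_net {X : Type} {a β K A B : ℝ} {d : ℕ} (ha : 1 ≤ a) (hd : 0 < d) (hβ : 0 < β)
    (hK : 1 ≤ K) {f : (Fin d → ℝ) → ℝ} (hf : memHolder a d β K f)
    (M n : ℕ) (hM : 1 ≤ M) (hMa : 4 * a ≤ (M : ℝ) ^ 2) (hm : 2 * A ^ 2 * (1 / 4) ^ n ≤ 1)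
    (hA : 2 * K + ⌊β⌋₊ + 1 ≤ A) (hAB : A ^ 2 ≤ B) (hB : 4 ≤ B) (hBd : 3 * (d : ℝ) + 1 ≤ B)
    (hBK : 12 * K ≤ B) (hBa : 4 * a ≤ B) (u : Fin d → X → ℝ) :
    ∃ v : X → ℝ, Reach B (d * (3 * M + 4) + (2 + Fintype.card (Wd d ⌊β⌋₊)) * M ^ d + d
        + Fintype.card (Wd d ⌊β⌋₊) * (6 + d) + Fintype.card (Wd d ⌊β⌋₊)) u
        (2 * (n + 3) + 3 + 1 + ⌊β⌋₊ * (n + 4) + 1) (fun _ : Unit => v) ∧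
      ∀ x, (∀ i, u i x ∈ Set.Icc (0 : ℝ) (1 / 2)) → (∀ i, Good M ((1 / 2) ^ n) (u i x)) →
        |v x - f (fun i => 4 * a * u i x - a)| ≤
          Fintype.card (Wd d ⌊β⌋₊) * (⌊β⌋₊ * (2 * A ^ 2 * (1 / 4) ^ n))
            + (d : ℝ) ^ ⌊β⌋₊ * K * (4 * a / M ^ 2) ^ β := by
  classical
  have htay := taylor ha hd hβ hK hf
  set q := ⌊β⌋₊ with hq
  obtain ⟨c, hcK, hct⟩ := htay
  let P : (Fin d → Fin M) → (Fin d → Fin M) → Fin d → ℝ := fun I J i =>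
    4 * a * ((I i : ℕ) / M + (J i : ℕ) / M ^ 2) - a
  let c' : Wd d q → (Fin d → Fin M) → (Fin d → Fin M) → ℝ := fun w I J =>
    if |c w (P I J)| ≤ 2 * K then c w (P I J) + 2 * K else 0
  have hc0 : ∀ w I J, 0 ≤ c' w I J := by
    intro w I J
    simp only [c']
    split_ifs with h
    · linarith [(abs_le.mp h).1]
    · exact le_rfl
  have hcA : ∀ w I J, c' w I J ≤ 4 * K := by
    intro w I J
    simp only [c']
    split_ifs with h
    · linarith [(abs_le.mp h).2]
    · linarith
  obtain ⟨T, hT, hTs⟩ := local_gadget (A := 4 * K) (B := B) (by linarith) M n d hM hB hBd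
    (by linarith) c' hc0 hcA u
  let t : Wd d q → X → ℝ := fun w x => T (Sum.inl w) x - 2 * K
  let z : Fin d → X → ℝ := fun i x => 4 * a * T (Sum.inr i) x
  have hchain := fun w : Wd d q => chain_gadget (A := A) (K := 2 * K) (B := B) (by linarith) hB hAB
    n d (t w) z w.1 (by
      have : ((w.1 : ℕ) : ℝ) ≤ q := by exact_mod_cast Nat.lt_succ_iff.mp w.1.2
      linarith) hm w.2
  choose h hR hh using hchain
  set cW := Fintype.card (Wd d q) with hcW
  set m1 := d * (3 * M + 4) + (2 + cW) * M ^ d + d + cW * (6 + d) + cW with hm1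
  refine ⟨fun x => ∑ w, h w x, ?_, ?_⟩
  · have s1 : Reach B m1 u (2 * (n + 3) + 3) T := hT.mono le_rfl (by omega)
    have s2 : Reach B m1 u (2 * (n + 3) + 3 + 1) (Sum.elim t z) := by
      refine s1.step (by rw [Fintype.card_sum, Fintype.card_fin]; omega) ?_
      rintro (w | i)
      · refine (((Lin.reg T (Sum.inl w)).add (Lin.const T (-(2 * K)))).mono ?_).congr ?_
        · rw [abs_neg, abs_of_nonneg (by linarith)]; linarith
        · intro x; simp only [Sum.elim_inl, t]; ring
      · refine (((Lin.reg T (Sum.inr i)).smul (4 * a)).mono ?_).congr ?_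
        · rw [abs_of_nonneg (by linarith)]; linarith
        · intro x; simp only [Sum.elim_inr, z]
    have s3 : Reach B m1 (Sum.elim t z) (q * (n + 4)) h := by
      refine (Reach.pi (m := 6 + d) fun w => ?_).mono le_rfl
        (show cW * (6 + d) ≤ m1 by omega)
      have r1 := (hR w).delay (L' := q * (n + 4)) (by
        rw [Fintype.card_sum, Fintype.card_fin, Fintype.card_unit]; omega) (by linarith)
        (Nat.mul_le_mul_right _ (Nat.lt_succ_iff.mp w.1.2))
      have r2 := r1.reindex (fun _ : Unit => (Sum.inl () : Unit ⊕ Fin d))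
      refine r2.source (Sum.elim (fun _ => Sum.inl w) Sum.inr) ?_
      rintro (k | k) <;> rfl
    refine (s2.trans s3).step (by omega) fun _ => ?_
    refine (Lin.sum_reg h (fun _ => 1) (by linarith) (by intro i; simp; linarith)).congr ?_
    intro x; simp
  · intro x hu hg
    choose I J hIJ1 hIJ2 using hg
    obtain ⟨ht1, ht2⟩ := hTs x I J hIJ1 hIJ2
    have hM0 : (0 : ℝ) < M := by exact_mod_cast hM
    have hM2 : (0 : ℝ) < (M : ℝ) ^ 2 := by positivity
    have hp : P I J ∈ cube a d := by
      intro i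
      have h0 : (0 : ℝ) ≤ (I i : ℕ) / M + (J i : ℕ) / M ^ 2 := by positivity
      have h1 := (hIJ1 i).trans (hu i).2
      simp only [P, Set.mem_Icc]
      constructor <;> nlinarith
    set y : Fin d → ℝ := fun i => 4 * a * u i x - a with hy
    have hyc : y ∈ cube a d := by
      intro i
      have h1 := hu i
      simp only [hy, Set.mem_Icc] at *
      constructor <;> nlinarith
    have htw : ∀ w, t w x = c w (P I J) := by
      intro w
      simp only [t, ht1, c', if_pos (hcK w _ hp)]; ring
    have hz : ∀ i, z i x = y i - P I J i := by
      intro i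
      simp only [z, ht2, hy, P]; ring
    have hzb : ∀ i, |z i x| ≤ 4 * a / M ^ 2 := by
      intro i
      have e : z i x = 4 * a * (u i x - ((I i : ℕ) / M + (J i : ℕ) / M ^ 2)) := by
        simp only [z, ht2]
      have h1 := hIJ1 i
      have h2 := hIJ2 i
      have h3 : (0 : ℝ) < (1 / 2) ^ n := by positivity
      rw [add_div] at h2
      rw [e, abs_of_nonneg (mul_nonneg (by linarith) (by linarith)), div_eq_mul_one_div (4 * a)]
      exact mul_le_mul_of_nonneg_left (by linarith) (by linarith)
    have hz1 : ∀ i, |z i x| ≤ 1 := fun i => (hzb i).trans ((div_le_one hM2).mpr hMa)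
    have hb0 : 0 ≤ 4 * a / (M : ℝ) ^ 2 := by positivity
    have hn : ‖y - P I J‖ ≤ 4 * a / M ^ 2 := by
      rw [pi_norm_le_iff_of_nonneg hb0]
      intro i
      rw [Real.norm_eq_abs, Pi.sub_apply, ← hz]; exact hzb i
    have e1 := hct _ hp _ hyc
    have e2 : |∑ w, h w x - ∑ w : Wd d q, c w (P I J) * ∏ j, (y (w.2 j) - P I J (w.2 j))|
        ≤ cW * (q * (2 * A ^ 2 * (1 / 4) ^ n)) := by
      rw [← Finset.sum_sub_distrib]
      refine (Finset.abs_sum_le_sum_abs _ _).trans ?_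
      have : ∀ w ∈ (Finset.univ : Finset (Wd d q)),
          |h w x - c w (P I J) * ∏ j, (y (w.2 j) - P I J (w.2 j))|
            ≤ q * (2 * A ^ 2 * (1 / 4) ^ n) := by
        intro w _
        have h1 := hh w x (by rw [htw]; exact hcK w _ hp) hz1
        simp only [htw, hz] at h1
        refine h1.trans (mul_le_mul_of_nonneg_right ?_ (by positivity))
        exact_mod_cast Nat.lt_succ_iff.mp w.1.2
      refine (Finset.sum_le_card_nsmul _ _ _ this).trans ?_
      rw [nsmul_eq_mul, Finset.card_univ]
    have e3 : (d : ℝ) ^ q * K * ‖y - P I J‖ ^ β ≤ (d : ℝ) ^ q * K * (4 * a / M ^ 2) ^ β :=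
      mul_le_mul_of_nonneg_left (Real.rpow_le_rpow (norm_nonneg _) hn hβ.le) (by positivity)
    have e4 := abs_sub_comm (f y) (∑ w : Wd d q, c w (P I J) * ∏ j, (y (w.2 j) - P I J (w.2 j)))
    rw [e4] at e1
    refine (abs_sub_le _ _ _).trans (add_le_add e2 (e1.trans e3))

lemma full_net {a β K A B C : ℝ} {d : ℕ} (ha : 1 ≤ a) (hd : 0 < d) (hβ : 0 < β)
    (hK : 1 ≤ K) {f : (Fin d → ℝ) → ℝ} (hf : memHolder a d β K f) (hC0 : 0 < C)
    (hC : ∀ p ∈ cube a d, ∀ y ∈ cube a d, ‖y - p‖ ≤ 1 → |f y - f p| ≤ C * ‖y - p‖ ^ (min β 1))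
    (M n : ℕ) (hM : 1 ≤ M) (hMa : 4 * a ≤ (M : ℝ) ^ 2) (hm : 2 * A ^ 2 * (1 / 4) ^ n ≤ 1)
    (hn4 : 4 * (1 / 2 : ℝ) ^ n ≤ 1) (hna : 8 * a * (1 / 2 : ℝ) ^ n ≤ 1)
    (hnM : 3 * (1 / 2 : ℝ) ^ n * M ^ 2 ≤ 1)
    (hA : 2 * K + ⌊β⌋₊ + 1 ≤ A) (hAB : A ^ 2 ≤ B) (hB : 4 ≤ B) (hBd : 3 * (d : ℝ) + 1 ≤ B)
    (hBK : 12 * K ≤ B) (hBa : 4 * a ≤ B) :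
    ∃ v : (Fin d → ℝ) → ℝ, Reach B (3 ^ d * (d * (3 * M + 4) +
        (2 + Fintype.card (Wd d ⌊β⌋₊)) * M ^ d + d
        + Fintype.card (Wd d ⌊β⌋₊) * (6 + d) + Fintype.card (Wd d ⌊β⌋₊)) + 4 * 3 ^ d)
        (fun (i : Fin d) (x : Fin d → ℝ) => x i)
        (1 + (2 * (n + 3) + 3 + 1 + ⌊β⌋₊ * (n + 4) + 1) + 4 * d) (fun _ : Unit => v) ∧
      ∀ x ∈ cube a d, |v x - f x| ≤
          Fintype.card (Wd d ⌊β⌋₊) * (⌊β⌋₊ * (2 * A ^ 2 * (1 / 4) ^ n))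
            + (d : ℝ) ^ ⌊β⌋₊ * K * (4 * a / M ^ 2) ^ β
            + C * (8 * a * (1 / 2 : ℝ) ^ n) ^ (min β 1) := by
  classical
  set δ : ℝ := (1 / 2 : ℝ) ^ n with hδ
  have hδ0 : 0 < δ := by positivity
  let u : (Fin d → Fin 3) → Fin d → (Fin d → ℝ) → ℝ := fun s i x =>
    (1 - 4 * δ) * (x i + a) / (4 * a) + (s i : ℕ) * δ
  have hcell := fun s => cell_net ha hd hβ hK hf M n hM hMa hm hA hAB hB hBd hBK hBa (u s)
  choose v hv hve using hcell
  set cW := Fintype.card (Wd d ⌊β⌋₊) with hcW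
  set m1 := d * (3 * M + 4) + (2 + cW) * M ^ d + d + cW * (6 + d) + cW with hm1
  obtain ⟨h, hh, hhe⟩ := median_gadget hB d d le_rfl v
  have ha0 : a ≠ 0 := by linarith
  have hsb : ∀ s : Fin 3, ((s : ℕ) : ℝ) ≤ 2 := by
    intro s; exact_mod_cast Nat.lt_succ_iff.mp s.2
  refine ⟨h, ?_, ?_⟩
  · have s1 : ∀ s, Reach B m1 (fun (i : Fin d) (x : Fin d → ℝ) => x i)
        (1 + (2 * (n + 3) + 3 + 1 + ⌊β⌋₊ * (n + 4) + 1)) (fun _ : Unit => v s) := by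
      intro s
      refine Reach.trans (Reach.one (by rw [Fintype.card_fin]; omega) fun i => ?_) (hv s)
      refine ((((Lin.reg (fun (i : Fin d) (x : Fin d → ℝ) => x i) i).smul
        ((1 - 4 * δ) / (4 * a))).add (Lin.const _ ((1 - 4 * δ) / 4 + (s i : ℕ) * δ))).mono
          ?_).congr ?_
      · have h1 : (1 - 4 * δ) / (4 * a) ≤ 1 := by
          rw [div_le_one (by linarith)]; linarith
        have h2 : 0 ≤ (1 - 4 * δ) / (4 * a) := div_nonneg (by linarith) (by linarith)
        have h3 : ((s i : ℕ) : ℝ) * δ ≤ 2 * δ := mul_le_mul_of_nonneg_right (hsb _) hδ0.le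
        have h4 : 0 ≤ ((s i : ℕ) : ℝ) * δ := by positivity
        rw [abs_of_nonneg h2, abs_of_nonneg (by linarith)]
        linarith
      · intro x; simp only [u]; field_simp; ring
    have s2 := Reach.pi s1
    have e : Fintype.card (Fin d → Fin 3) = 3 ^ d := by simp
    rw [e] at s2
    exact (s2.mono le_rfl (Nat.le_add_right _ _)).trans (hh.mono le_rfl (Nat.le_add_left _ _))
  · intro x hx
    have hbase : ∀ i, 0 ≤ (1 - 4 * δ) * (x i + a) / (4 * a) ∧
        (1 - 4 * δ) * (x i + a) / (4 * a) ≤ 1 / 2 - 2 * δ := by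
      intro i
      have := hx i
      simp only [Set.mem_Icc] at this
      constructor
      · exact div_nonneg (mul_nonneg (by linarith) (by linarith)) (by linarith)
      · rw [div_le_iff₀ (by linarith)]; nlinarith
    refine hhe x (f x) _ (fun i s => Good M δ ((1 - 4 * δ) * (x i + a) / (4 * a) + (s : ℕ) * δ))
      (fun i => Good.two hM (hbase i).1 (by linarith [(hbase i).2]) hδ0 hnM) ?_
    intro s hs
    have hui : ∀ i, u s i x ∈ Set.Icc (0 : ℝ) (1 / 2) := by
      intro i
      have h3 : ((s i : ℕ) : ℝ) * δ ≤ 2 * δ := mul_le_mul_of_nonneg_right (hsb _) hδ0.le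
      have h4 : 0 ≤ ((s i : ℕ) : ℝ) * δ := by positivity
      have := hbase i
      simp only [u, Set.mem_Icc]
      constructor <;> linarith
    have e1 := hve s x hui hs
    set y : Fin d → ℝ := fun i => 4 * a * u s i x - a with hy
    have hyc : y ∈ cube a d := by
      intro i
      have h1 := hui i
      simp only [hy, Set.mem_Icc] at *
      constructor <;> nlinarith
    have hyx : ‖y - x‖ ≤ 8 * a * δ := by
      rw [pi_norm_le_iff_of_nonneg (by positivity)]
      intro i
      have e : (y - x) i = 4 * δ * (a * (s i : ℕ) - (x i + a)) := by
        simp only [hy, u, Pi.sub_apply]; field_simp; ring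
      rw [e, Real.norm_eq_abs, abs_mul, abs_of_pos (by linarith : 0 < 4 * δ)]
      have h1 := hx i
      simp only [Set.mem_Icc] at h1
      have h2 := hsb (s i)
      have h3 : (0 : ℝ) ≤ (s i : ℕ) := by positivity
      have h4 : |a * (s i : ℕ) - (x i + a)| ≤ 2 * a := by
        rw [abs_le]; constructor <;> nlinarith
      nlinarith
    have e2 := hC x hx y hyc (hyx.trans hna)
    have e3 : C * ‖y - x‖ ^ (min β 1) ≤ C * (8 * a * δ) ^ (min β 1) :=
      mul_le_mul_of_nonneg_left (Real.rpow_le_rpow (norm_nonneg _) hyx (by positivity)) hC0.le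
    exact (abs_sub_le _ (f y) _).trans (add_le_add e1 (e2.trans e3))

end DNN

namespace DNN

lemma width_bound {d M cW : ℕ} (hd : 0 < d) (hM : 1 ≤ M) :
    2 * (3 ^ d * (d * (3 * M + 4) + (2 + cW) * M ^ d + d + cW * (6 + d) + cW) + 4 * 3 ^ d)
      ≤ (2 * (3 ^ d * (7 * d + (2 + cW) + d + cW * (6 + d) + cW) + 4 * 3 ^ d)) * M ^ d := by
  have h1 : 1 ≤ M ^ d := Nat.one_le_pow _ _ hM
  have h2 : M ≤ M ^ d := Nat.le_self_pow hd.ne' M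
  have a1 : d * (3 * M + 4) ≤ 7 * d * M ^ d := by
    calc d * (3 * M + 4) ≤ d * (3 * M ^ d + 4 * M ^ d) := by gcongr; omega
      _ = _ := by ring
  have a2 : d ≤ d * M ^ d := Nat.le_mul_of_pos_right _ h1
  have a3 : cW * (6 + d) ≤ cW * (6 + d) * M ^ d := Nat.le_mul_of_pos_right _ h1
  have a4 : cW ≤ cW * M ^ d := Nat.le_mul_of_pos_right _ h1
  have a5 : 4 * 3 ^ d ≤ 4 * 3 ^ d * M ^ d := Nat.le_mul_of_pos_right _ h1
  calc _ ≤ 2 * (3 ^ d * (7 * d * M ^ d + (2 + cW) * M ^ d + d * M ^ d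
        + cW * (6 + d) * M ^ d + cW * M ^ d) + 4 * 3 ^ d * M ^ d) := by gcongr
    _ = _ := by ring

set_option maxHeartbeats 1000000 in
theorem main (a : ℝ) (ha : 1 ≤ a) (d : ℕ) (hd : 0 < d) (β : ℝ) (hβ : 0 < β)
    (K : ℝ) (hK : 1 ≤ K) (ν : ℝ) (hν0 : 0 ≤ ν) (hν1 : ν < 1) :
    ∃ CL Cr CB c₁ : ℝ, 0 < CL ∧ 0 < Cr ∧ 0 < CB ∧ 0 < c₁ ∧
      ∀ f₀ : (Fin d → ℝ) → ℝ, memHolder a d β K f₀ →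
        ∃ M₀ : ℕ, ∀ M : ℕ, M₀ ≤ M →
          ∃ f : (Fin d → ℝ) → ℝ,
            memDNN ν d ⌈CL * Real.logb 2 M⌉₊ ⌈Cr * (M : ℝ) ^ d⌉₊ CB f ∧
            ∀ x ∈ cube a d, |f x - f₀ x| ≤ c₁ / (M : ℝ) ^ (2 * β) := by
  obtain ⟨C, hC0, hC⟩ := holder_cont (d := d) ha hd hβ hK
  set γ := min β 1 with hγ
  have hγ0 : 0 < γ := by positivity
  have hγ1 : γ ≤ 1 := min_le_right _ _
  obtain ⟨P, hP⟩ := exists_nat_ge (2 * β / γ + 3)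
  have hPγ : 2 * β ≤ P * γ := by
    rw [← div_le_iff₀ hγ0]; linarith
  have hPβ : 2 * β ≤ P := by nlinarith [(Nat.cast_nonneg P : (0 : ℝ) ≤ P)]
  have hP3 : 3 ≤ P := by
    have : (3 : ℝ) ≤ P := by
      have : 0 ≤ 2 * β / γ := by positivity
      linarith
    exact_mod_cast this
  set q := ⌊β⌋₊ with hq
  set cW := Fintype.card (Wd d q) with hcW
  set A : ℝ := 2 * K + q + 1 with hA
  set B : ℝ := 4 + (3 * d + 1) + 12 * K + A ^ 2 + 4 * a with hB
  have hA2 : 0 ≤ A ^ 2 := sq_nonneg A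
  have hd0 : (0 : ℝ) ≤ d := Nat.cast_nonneg d
  set CrN : ℕ := 2 * (3 ^ d * (7 * d + (2 + cW) + d + cW * (6 + d) + cW) + 4 * 3 ^ d) with hCr
  set CLN : ℕ := 2 * (2 + q) * P + 12 + 4 * q + 4 * d with hCL
  have hν2 : 0 < 1 - ν ^ 2 := by nlinarith
  refine ⟨CLN, CrN, 2 * B / (1 - ν ^ 2),
    cW * (q * (2 * A ^ 2)) + (d : ℝ) ^ q * K * (4 * a) ^ β + C * (8 * a) ^ γ, ?_, ?_, ?_, ?_, ?_⟩
  · have : 0 < CLN := by omega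
    exact_mod_cast this
  · have : 0 < CrN := by positivity
    exact_mod_cast this
  · exact div_pos (by linarith) hν2
  · have : 0 < C * (8 * a) ^ γ := by positivity
    have : 0 ≤ (d : ℝ) ^ q * K * (4 * a) ^ β := by positivity
    have : 0 ≤ (cW : ℝ) * (q * (2 * A ^ 2)) := by positivity
    linarith
  intro f hf
  obtain ⟨M₀, hM₀⟩ := exists_nat_ge (4 + 8 * a + 2 * A ^ 2)
  refine ⟨M₀, fun M hMM => ?_⟩
  have hMR : 4 + 8 * a + 2 * A ^ 2 ≤ (M : ℝ) := hM₀.trans (by exact_mod_cast hMM)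
  have hM1R : (1 : ℝ) ≤ M := by linarith
  have hM1 : 1 ≤ M := by exact_mod_cast hM1R
  have hM0 : (0 : ℝ) < M := by linarith
  set l := Nat.clog 2 M with hl
  set n := P * l with hn
  have hMl : (M : ℝ) ≤ 2 ^ l := by exact_mod_cast Nat.le_pow_clog (by norm_num) M
  have hδ : (1 / 2 : ℝ) ^ n ≤ 1 / (M : ℝ) ^ P := by
    rw [div_pow, one_pow, hn, mul_comm, pow_mul]
    exact one_div_le_one_div_of_le (by positivity) (pow_le_pow_left₀ hM0.le hMl P)
  have hδ0 : (0 : ℝ) < (1 / 2 : ℝ) ^ n := by positivity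
  have hM3 : (M : ℝ) ^ 3 ≤ (M : ℝ) ^ P := pow_le_pow_right₀ hM1R hP3
  have hδ3 : (1 / 2 : ℝ) ^ n * (M : ℝ) ^ 3 ≤ 1 := by
    have h1 : (1 / 2 : ℝ) ^ n ≤ 1 / (M : ℝ) ^ 3 :=
      hδ.trans (one_div_le_one_div_of_le (by positivity) hM3)
    rwa [le_div_iff₀ (by positivity)] at h1
  have hM13 : (M : ℝ) ≤ (M : ℝ) ^ 3 := le_self_pow₀ hM1R (by norm_num)
  have hδ1 : (1 / 2 : ℝ) ^ n * (M : ℝ) ≤ 1 :=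
    (mul_le_mul_of_nonneg_left hM13 hδ0.le).trans hδ3
  have h4 : (1 / 4 : ℝ) ^ n ≤ (1 / 2 : ℝ) ^ n := pow_le_pow_left₀ (by norm_num) (by norm_num) n
  have h40 : (0 : ℝ) < (1 / 4 : ℝ) ^ n := by positivity
  have hm : 2 * A ^ 2 * (1 / 4) ^ n ≤ 1 := by
    calc 2 * A ^ 2 * (1 / 4) ^ n ≤ M * (1 / 2) ^ n := by
          apply mul_le_mul _ h4 h40.le hM0.le; linarith
      _ ≤ 1 := by linarith
  have k1 : 4 * a ≤ (M : ℝ) ^ 2 := by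
    have : (M : ℝ) ≤ (M : ℝ) ^ 2 := le_self_pow₀ hM1R (by norm_num)
    linarith
  have k2 : 4 * (1 / 2 : ℝ) ^ n ≤ 1 := by
    have : (1 / 2 : ℝ) ^ n * 4 ≤ (1 / 2 : ℝ) ^ n * M :=
      mul_le_mul_of_nonneg_left (by linarith) hδ0.le
    linarith
  have k3 : 8 * a * (1 / 2 : ℝ) ^ n ≤ 1 := by
    have : (1 / 2 : ℝ) ^ n * (8 * a) ≤ (1 / 2 : ℝ) ^ n * M :=
      mul_le_mul_of_nonneg_left (by linarith) hδ0.le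
    linarith
  have k4 : 3 * (1 / 2 : ℝ) ^ n * (M : ℝ) ^ 2 ≤ 1 := by
    have h3 : 3 * (M : ℝ) ^ 2 ≤ (M : ℝ) ^ 3 := by
      rw [pow_succ' (M : ℝ) 2]
      exact mul_le_mul_of_nonneg_right (by linarith) (sq_nonneg _)
    have := mul_le_mul_of_nonneg_left h3 hδ0.le
    linarith
  obtain ⟨v, hv, hve⟩ := full_net (A := A) (B := B) ha hd hβ hK hf hC0 (hC f hf) M n hM1
    k1 hm k2 k3 k4 le_rfl (by linarith) (by linarith) (by linarith) (by linarith) (by linarith)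
  refine ⟨v, ?_, ?_⟩
  · have hlog1 : 1 ≤ Real.logb 2 M := by
      rw [Real.le_logb_iff_rpow_le (by norm_num) hM0, Real.rpow_one]; linarith
    have hllog : (l : ℝ) ≤ 2 * Real.logb 2 M := by
      have h1 : l = ⌈Real.logb 2 M⌉₊ := by
        rw [hl]; exact_mod_cast (Real.natCeil_logb_natCast 2 M).symm
      have h2 := Nat.ceil_lt_add_one (by linarith : 0 ≤ Real.logb 2 M)
      rw [h1]; linarith
    have hD : 1 + (2 * (n + 3) + 3 + 1 + q * (n + 4) + 1) + 4 * d ≤ ⌈(CLN : ℝ) * Real.logb 2 M⌉₊ := by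
      have : ((1 + (2 * (n + 3) + 3 + 1 + q * (n + 4) + 1) + 4 * d : ℕ) : ℝ)
          ≤ (CLN : ℝ) * Real.logb 2 M := by
        have e : ((1 + (2 * (n + 3) + 3 + 1 + q * (n + 4) + 1) + 4 * d : ℕ) : ℝ)
            = (2 + q) * P * l + (12 + 4 * q + 4 * d) := by
          rw [hn]; push_cast; ring
        have e' : (CLN : ℝ) = 2 * ((2 + q) * P) + (12 + 4 * q + 4 * d) := by
          rw [hCL]; push_cast; ring
        rw [e, e']
        have h1 : (2 + q) * P * (l : ℝ) ≤ (2 + q) * P * (2 * Real.logb 2 M) :=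
          mul_le_mul_of_nonneg_left hllog (by positivity)
        have h2 : (12 + 4 * q + 4 * d : ℝ) ≤ (12 + 4 * q + 4 * d : ℝ) * Real.logb 2 M :=
          le_mul_of_one_le_right (by positivity) hlog1
        linarith
      exact_mod_cast this.trans (Nat.le_ceil _)
    refine memDNN_of_reach hν0 hν1 (by linarith) (m := 3 ^ d * (d * (3 * M + 4) +
        (2 + cW) * M ^ d + d + cW * (6 + d) + cW) + 4 * 3 ^ d) ?_ (by omega)
      (hv.delay ?_ (by linarith) hD)
    · refine (width_bound hd hM1).trans ?_
      have : ((CrN * M ^ d : ℕ) : ℝ) ≤ ⌈(CrN : ℝ) * (M : ℝ) ^ d⌉₊ := by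
        push_cast; exact Nat.le_ceil _
      exact_mod_cast this
    · rw [Fintype.card_unit]
      have : 1 ≤ 3 ^ d := Nat.one_le_pow _ _ (by norm_num)
      omega
  · intro x hx
    refine (hve x hx).trans ?_
    have hD0 : 0 < (M : ℝ) ^ (2 * β) := Real.rpow_pos_of_pos hM0 _
    have b1 : (1 / 2 : ℝ) ^ n ≤ 1 / (M : ℝ) ^ (2 * β) := by
      refine hδ.trans (one_div_le_one_div_of_le hD0 ?_)
      rw [← Real.rpow_natCast]
      exact Real.rpow_le_rpow_of_exponent_le hM1R hPβ
    have b2 : (4 * a / (M : ℝ) ^ 2) ^ β = (4 * a) ^ β / (M : ℝ) ^ (2 * β) := by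
      rw [Real.div_rpow (by linarith) (by positivity), ← Real.rpow_natCast, ← Real.rpow_mul hM0.le]
      norm_num
    have b3 : (8 * a * (1 / 2 : ℝ) ^ n) ^ γ ≤ (8 * a) ^ γ / (M : ℝ) ^ (2 * β) := by
      rw [Real.mul_rpow (by linarith) hδ0.le, div_eq_mul_one_div ((8 * a) ^ γ)]
      refine mul_le_mul_of_nonneg_left ?_ (by positivity)
      refine (Real.rpow_le_rpow hδ0.le hδ hγ0.le).trans ?_
      rw [Real.div_rpow (by norm_num) (by positivity), Real.one_rpow, ← Real.rpow_natCast,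
        ← Real.rpow_mul hM0.le]
      exact one_div_le_one_div_of_le hD0 (Real.rpow_le_rpow_of_exponent_le hM1R hPγ)
    have t1 : (cW : ℝ) * (q * (2 * A ^ 2 * (1 / 4) ^ n))
        ≤ cW * (q * (2 * A ^ 2)) / (M : ℝ) ^ (2 * β) := by
      have : (cW : ℝ) * (q * (2 * A ^ 2 * (1 / 4) ^ n))
        = cW * (q * (2 * A ^ 2)) * (1 / 4) ^ n := by ring
      rw [this, div_eq_mul_one_div (_ * _)]
      exact mul_le_mul_of_nonneg_left (h4.trans b1) (by positivity)
    have t3 := mul_le_mul_of_nonneg_left b3 hC0.le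
    rw [b2, add_div, add_div, mul_div_assoc _ ((4 * a) ^ β), mul_div_assoc C]
    linarith

end DNN

/-- approximation of β-Hölder functions by fully connected Leaky-ReLU
networks with bounded parameters.  There are constants `C_L, C_r, C_B, c₁ > 0` such that
every `f₀ ∈ H_d^β(K)` is, for every sufficiently large `M`, approximated within
`c₁ M^{−2β}` in sup-norm on `[−a,a]^d` by a network in
`F_{ρν}^{DNN}(⌈C_L log₂ M⌉, ⌈C_r M^d⌉, C_B)`. -/
theorem dnn_approximation_of_holder_functions
    (a : ℝ) (ha : 1 ≤ a) (d : ℕ) (hd : 0 < d) (β : ℝ) (hβ : 0 < β)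
    (K : ℝ) (hK : 1 ≤ K) (ν : ℝ) (hν0 : 0 ≤ ν) (hν1 : ν < 1) :
    ∃ CL Cr CB c₁ : ℝ, 0 < CL ∧ 0 < Cr ∧ 0 < CB ∧ 0 < c₁ ∧
      ∀ f₀ : (Fin d → ℝ) → ℝ, memHolder a d β K f₀ →
        ∃ M₀ : ℕ, ∀ M : ℕ, M₀ ≤ M →
          ∃ f : (Fin d → ℝ) → ℝ,
            memDNN ν d ⌈CL * Real.logb 2 M⌉₊ ⌈Cr * (M : ℝ) ^ d⌉₊ CB f ∧
            ∀ x ∈ cube a d, |f x - f₀ x| ≤ c₁ / (M : ℝ) ^ (2 * β) := by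
  exact DNN.main a ha d hd β hβ K hK ν hν0 hν1
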